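/- arXiv:1610.05961 — 2 statements merged into one kernel-verified Lean document; each statement's English description precedes it below -/
import Mathlib

section
/- Suppose K = ⌈n^{1−ε}⌉ for a constant 0 < ε < 1 and M is a fixed positive integer constant. Then under the Uniform popularity distribution, with probability 1 − o(1) over the random cache placement there exists a file W_j whose Voronoi tessellation V_j contains a cell of size Θ(K·log n/M); i.e., there exist constants c_1, c_2 > 0 such that some Voronoi cell has size between c_1·K·log n/M and c_2·K·log n/M. -/
open scoped Classical BigOperators
open Filter

/-- Nodes of the `m × m` torus grid (a `√n × √n` grid with wrap-around, `n = m²`). -/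
abbrev Node (m : ℕ) := Fin m × Fin m

/-- Wrap-around distance between two coordinates in `Fin m`. -/
def cdist {m : ℕ} (a b : Fin m) : ℕ :=
  min ((a.val + m - b.val) % m) ((b.val + m - a.val) % m)

/-- Graph (shortest-path) distance on the torus grid. -/
def torusDist {m : ℕ} (u v : Node m) : ℕ := cdist u.1 v.1 + cdist u.2 v.2

/-- A cache placement: each of the `m²` nodes fills `M` cache slots with files from a
library of `K` files.  Under the Uniform popularity distribution the random placement
is uniform over all such functions (each slot i.i.d. uniform on the `K` files). -/
abbrev Placement (m M K : ℕ) := Node m → Fin M → Fin K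

/-- Node `u` has cached file `j`. -/
def cached {m M K : ℕ} (ω : Placement m M K) (u : Node m) (j : Fin K) : Prop :=
  ∃ i, ω u i = j

/-- Probability of an event under the uniform measure on a finite type. -/
noncomputable def unifProb {Ω : Type*} [Fintype Ω] (E : Set Ω) : ℝ :=
  ((Finset.univ.filter (fun ω => ω ∈ E)).card : ℝ) / (Fintype.card Ω : ℝ)

/-- `A` is a Voronoi assignment for file `j`: every node is assigned to a node that
cached `j` and is at minimum graph distance (the tie-breaking being encoded by the
choice of `A`). -/
def nearestAssignment {m M K : ℕ} (ω : Placement m M K) (j : Fin K)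
    (A : Node m → Node m) : Prop :=
  ∀ w, cached ω (A w) j ∧ ∀ v, cached ω v j → torusDist w (A w) ≤ torusDist w v

/-- The Voronoi cell of center `v` under the assignment `A`. -/
noncomputable def cell {m : ℕ} (A : Node m → Node m) (v : Node m) : Finset (Node m) :=
  Finset.univ.filter (fun w => A w = v)

/-- Library size `K = ⌈n^(1-ε)⌉`. -/
noncomputable def Kf (ε : ℝ) (n : ℕ) : ℕ := ⌈(n : ℝ) ^ (1 - ε)⌉₊

noncomputable def uP {Ω : Type*} (E : Set Ω) : ℝ := (Nat.card E : ℝ) / (Nat.card Ω : ℝ)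

lemma unifProb_eq {Ω : Type*} [Fintype Ω] (E : Set Ω) : unifProb E = uP E := by
  unfold unifProb uP
  rw [Nat.card_eq_fintype_card, Nat.card_eq_fintype_card, Fintype.card_subtype]

lemma uP_eq {Ω : Type*} (E : Set Ω) : uP E = (E.ncard : ℝ) / (Nat.card Ω : ℝ) := rfl

lemma uP_nonneg {Ω : Type*} (E : Set Ω) : 0 ≤ uP E := by
  unfold uP; positivity

lemma uP_mono {Ω : Type*} [Finite Ω] {E F : Set Ω} (h : E ⊆ F) : uP E ≤ uP F := by
  rw [uP_eq, uP_eq]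
  gcongr
  exact Set.toFinite F

lemma uP_le_one {Ω : Type*} [Finite Ω] (E : Set Ω) : uP E ≤ 1 := by
  refine (uP_mono (Set.subset_univ E)).trans ?_
  rw [uP, Nat.card_univ]
  exact div_self_le_one _

lemma uP_compl {Ω : Type*} [Finite Ω] [Nonempty Ω] (E : Set Ω) : uP Eᶜ = 1 - uP E := by
  have h := Set.ncard_add_ncard_compl E
  have hp : (Nat.card Ω : ℝ) ≠ 0 := by exact_mod_cast Nat.card_pos.ne'
  rw [uP_eq, uP_eq, eq_sub_iff_add_eq, ← add_div, div_eq_one_iff_eq hp, add_comm]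
  exact_mod_cast h

lemma uP_union {Ω : Type*} [Finite Ω] (E F : Set Ω) : uP (E ∪ F) ≤ uP E + uP F := by
  rw [uP_eq, uP_eq, uP_eq, ← add_div]
  gcongr
  exact_mod_cast Set.ncard_union_le E F

lemma uP_iUnion {Ω ι : Type*} [Finite Ω] [Fintype ι] (E : ι → Set Ω) :
    uP (⋃ i, E i) ≤ ∑ i, uP (E i) := by
  have : ∀ s : Finset ι, uP (⋃ i ∈ s, E i) ≤ ∑ i ∈ s, uP (E i) := by
    intro s
    induction s using Finset.induction_on with
    | empty => simp [uP]
    | insert a s ha ih =>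
      rw [Finset.set_biUnion_insert, Finset.sum_insert ha]
      exact (uP_union _ _).trans (by gcongr)
  simpa using this Finset.univ

lemma uP_equiv {Ω Ω' : Type*} [Finite Ω] [Finite Ω'] (e : Ω ≃ Ω') (E : Set Ω') :
    uP (e ⁻¹' E) = uP E := by
  rw [uP, uP, Nat.card_congr e]
  congr 2
  exact Nat.card_congr (e.subtypeEquiv (fun a => Iff.rfl))

lemma uP_fst {Ω Ω' : Type*} [Finite Ω] [Finite Ω'] [Nonempty Ω'] (E : Set Ω) :
    uP {p : Ω × Ω' | p.1 ∈ E} = uP E := by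
  have : {p : Ω × Ω' | p.1 ∈ E} = E ×ˢ (Set.univ : Set Ω') := by ext; simp
  rw [this, uP, uP, Nat.card_congr (Equiv.Set.prod E Set.univ), Nat.card_prod,
    Nat.card_prod, Nat.card_univ]
  push_cast
  have h : (Nat.card Ω' : ℝ) ≠ 0 := by exact_mod_cast Nat.card_pos.ne'
  rw [mul_div_mul_right _ _ h]

lemma uP_restrict {N S X : Type*} [Finite N] [Finite S] [Finite X] [Nonempty X]
    (f : S → N) (hf : Function.Injective f) (P : Set (S → X)) :
    uP {ω : N → X | (ω ∘ f) ∈ P} = uP P := by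
  let e0 : S ⊕ ((Set.range f)ᶜ : Set N) ≃ N :=
    (Equiv.sumCongr (Equiv.ofInjective f hf) (Equiv.refl _)).trans (Equiv.Set.sumCompl (Set.range f))
  let e : (N → X) ≃ (S → X) × (((Set.range f)ᶜ : Set N) → X) :=
    (Equiv.arrowCongr e0.symm (Equiv.refl X)).trans (Equiv.sumArrowEquivProdArrow _ _ _)
  rw [← uP_fst (Ω' := (((Set.range f)ᶜ : Set N) → X)) P, ← uP_equiv e]
  rfl

lemma uP_pi {T Y : Type*} [Fintype T] [Finite Y] (P : Set Y) :
    uP {η : T → Y | ∀ t, η t ∈ P} = uP P ^ Fintype.card T := by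
  rw [uP, uP]
  have e : {η : T → Y | ∀ t, η t ∈ P} ≃ (T → P) :=
    Equiv.subtypePiEquivPi (p := fun _ y => y ∈ P)
  rw [Nat.card_congr e, Nat.card_fun, Nat.card_fun, Nat.card_eq_fintype_card (α := T)]
  push_cast
  rw [div_pow]

/-- a single slot array avoiding a file -/
lemma uP_avoid (M K : ℕ) (hK : 1 ≤ K) (j : Fin K) :
    uP {x : Fin M → Fin K | ∀ i, x i ≠ j} = (1 - 1 / (K : ℝ)) ^ M := by
  have hpi := uP_pi (T := Fin M) ({j}ᶜ : Set (Fin K))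
  rw [Fintype.card_fin] at hpi
  have hne : Nonempty (Fin K) := ⟨j⟩
  rw [uP_compl] at hpi
  have h1 : uP ({j} : Set (Fin K)) = 1 / K := by
    rw [uP]; simp
  rw [h1] at hpi
  rw [← hpi]
  rfl

lemma uP_avoid_box (B : Type*) [Fintype B] (M K : ℕ) (hK : 1 ≤ K) (j : Fin K) :
    uP {η : B → Fin M → Fin K | ∀ b i, η b i ≠ j} =
      (1 - 1 / (K : ℝ)) ^ (M * Fintype.card B) := by
  rw [pow_mul, ← uP_avoid M K hK j, ← uP_pi]
  rfl

lemma uP_fiber {Ω Ω' : Type*} [Finite Ω] [Finite Ω'] [Nonempty Ω] (E : Set (Ω × Ω')) (p : ℝ)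
    (h : ∀ a, uP {b | (a, b) ∈ E} = p) : uP E = p := by
  by_cases hΩ' : Nonempty Ω'
  swap
  · rw [not_nonempty_iff] at hΩ'
    rw [← h (Classical.arbitrary Ω), uP, uP]; simp
  haveI := Fintype.ofFinite Ω
  have e : E ≃ Σ a, {b | (a, b) ∈ E} :=
    { toFun := fun x => ⟨x.1.1, x.1.2, x.2⟩
      invFun := fun y => ⟨(y.1, y.2.1), y.2.2⟩
      left_inv := fun x => rfl
      right_inv := fun x => rfl }
  rw [uP, Nat.card_congr e, Nat.card_sigma, Nat.card_prod]
  have h' : ∀ a, (Nat.card {b | (a, b) ∈ E} : ℝ) = p * Nat.card Ω' := by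
    intro a
    have := h a
    rw [uP, div_eq_iff (by exact_mod_cast Nat.card_pos.ne')] at this
    exact this
  push_cast
  simp_rw [h']
  rw [Finset.sum_const, Finset.card_univ, nsmul_eq_mul, ← Nat.card_eq_fintype_card (α := Ω)]
  have h1 : (Nat.card Ω : ℝ) ≠ 0 := by exact_mod_cast Nat.card_pos.ne'
  have h2 : (Nat.card Ω' : ℝ) ≠ 0 := by exact_mod_cast Nat.card_pos.ne'
  field_simp

lemma uP_isolated (B : Type*) [Fintype B] (b0 : B) (M K : ℕ) (hK : 1 ≤ K) (i0 : Fin M) :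
    (1 - 1 / (K : ℝ)) ^ (M * Fintype.card B) ≤
    uP {η : B → Fin M → Fin K | ∀ b, b ≠ b0 → ∀ i, η b i ≠ η b0 i0} := by
  have hne : Nonempty (Fin K) := ⟨⟨0, hK⟩⟩
  have key := uP_fiber (Ω := Fin M → Fin K) (Ω' := {b // b ≠ b0} → Fin M → Fin K)
    {p | ∀ b i, p.2 b i ≠ p.1 i0} ((1 - 1 / (K : ℝ)) ^ (M * Fintype.card {b // b ≠ b0})) (fun a => uP_avoid_box _ M K hK (a i0))
  have h2 : {η : B → Fin M → Fin K | ∀ b, b ≠ b0 → ∀ i, η b i ≠ η b0 i0} =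
      (Equiv.funSplitAt b0 (Fin M → Fin K)) ⁻¹' {p | ∀ b i, p.2 b i ≠ p.1 i0} := by
    ext η
    simp [Equiv.funSplitAt, Equiv.piSplitAt]
  rw [h2, uP_equiv, key]
  have hK1 : (1:ℝ) / K ≤ 1 := by
    rw [div_le_one (by positivity)]; exact_mod_cast hK
  have hK2 : (0:ℝ) ≤ 1 / K := by positivity
  apply pow_le_pow_of_le_one (by linarith) (by linarith)
  exact Nat.mul_le_mul_left _ (Fintype.card_subtype_le _)

lemma uP_blocks {N T B X : Type*} [Finite N] [Fintype T] [Finite B] [Finite X] [Nonempty X]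
    (f : T × B → N) (hf : Function.Injective f) (P : Set (B → X)) :
    uP {ω : N → X | ∀ t, (fun b => ω (f (t, b))) ∈ P} = uP P ^ Fintype.card T := by
  rw [← uP_pi, ← uP_equiv (Equiv.curry T B X), ← uP_restrict f hf]
  rfl
lemma cdist_eq {m : ℕ} (a b : Fin m) : cdist a b =
    min (if b.val ≤ a.val then a.val - b.val else a.val + m - b.val)
      (if a.val ≤ b.val then b.val - a.val else b.val + m - a.val) := by
  unfold cdist
  have key : ∀ x y : Fin m, (x.val + m - y.val) % m =
      if y.val ≤ x.val then x.val - y.val else x.val + m - y.val := by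
    intro x y
    have hx := x.2
    have hy := y.2
    split_ifs with h
    · rw [show x.val + m - y.val = (x.val - y.val) + m by omega, Nat.add_mod_right,
        Nat.mod_eq_of_lt (by omega)]
    · rw [Nat.mod_eq_of_lt (by omega)]
  rw [key, key]

lemma cdist_comm {m : ℕ} (a b : Fin m) : cdist a b = cdist b a := by
  unfold cdist; exact min_comm _ _

lemma cdist_triangle {m : ℕ} (a b c : Fin m) : cdist a c ≤ cdist a b + cdist b c := by
  have ha := a.2
  have hb := b.2
  have hc := c.2
  simp only [cdist_eq]
  split_ifs <;> omega

lemma torusDist_comm {m : ℕ} (a b : Node m) : torusDist a b = torusDist b a := by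
  unfold torusDist; rw [cdist_comm, cdist_comm a.2]

lemma torusDist_triangle {m : ℕ} (a b c : Node m) :
    torusDist a c ≤ torusDist a b + torusDist b c := by
  unfold torusDist
  have := cdist_triangle a.1 b.1 c.1
  have := cdist_triangle a.2 b.2 c.2
  omega

/-- shift of a coordinate -/
def cshift {m : ℕ} (a : Fin m) (x : ℕ) : Fin m := ⟨(a.val + x) % m, Nat.mod_lt _ a.pos⟩

lemma cshift_val {m : ℕ} (a : Fin m) (x : ℕ) (hx : x < m) :
    (cshift a x).val = if a.val + x < m then a.val + x else a.val + x - m := by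
  have ha := a.2
  unfold cshift
  simp only
  split_ifs with h
  · exact Nat.mod_eq_of_lt h
  · rw [Nat.mod_eq_sub_mod (by omega), Nat.mod_eq_of_lt (by omega)]

lemma cdist_cshift {m : ℕ} (a : Fin m) (x : ℕ) (hx : x < m) : cdist a (cshift a x) ≤ x := by
  have ha := a.2
  rw [cdist_eq, cshift_val a x hx]
  split_ifs <;> omega

lemma cshift_inj {m : ℕ} (a : Fin m) (x y : ℕ) (hx : x < m) (hy : y < m)
    (h : cshift a x = cshift a y) : x = y := by
  have ha := a.2
  have h' := congrArg Fin.val h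
  rw [cshift_val a x hx, cshift_val a y hy] at h'
  split_ifs at h' <;> omega

lemma cball_card {m : ℕ} (v : Fin m) (R : ℕ) :
    (Finset.univ.filter (fun a : Fin m => cdist a v ≤ R)).card ≤ 2 * (R + 1) := by
  have hsub : Finset.univ.filter (fun a : Fin m => cdist a v ≤ R) ⊆
      ((Finset.range (R + 1)).image (fun x => cshift v x)) ∪
      ((Finset.range (R + 1)).image (fun x => cshift v (m - x))) := by
    intro a ha
    simp only [Finset.mem_filter, Finset.mem_univ, true_and] at ha
    have h1 := a.2
    have h2 := v.2
    have hc := cdist_eq a v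
    simp only [Finset.mem_union, Finset.mem_image, Finset.mem_range]
    rcases le_total v.val a.val with h | h
    · by_cases h3 : a.val - v.val ≤ R
      · left
        refine ⟨a.val - v.val, by omega, ?_⟩
        apply Fin.ext
        rw [cshift_val _ _ (by omega)]
        split_ifs <;> omega
      · right
        refine ⟨v.val + m - a.val, ?_, ?_⟩
        · split_ifs at hc <;> omega
        · apply Fin.ext
          rw [cshift_val _ _ (by omega)]
          split_ifs <;> omega
    · by_cases h0 : v.val = a.val
      · left
        refine ⟨0, by omega, ?_⟩
        apply Fin.ext
        rw [cshift_val _ _ (by omega)]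
        split_ifs <;> omega
      by_cases h3 : v.val - a.val ≤ R
      · right
        refine ⟨v.val - a.val, by omega, ?_⟩
        apply Fin.ext
        rw [cshift_val _ _ (by omega)]
        split_ifs <;> omega
      · left
        refine ⟨a.val + m - v.val, ?_, ?_⟩
        · split_ifs at hc <;> omega
        · apply Fin.ext
          rw [cshift_val _ _ (by omega)]
          split_ifs <;> omega
  refine (Finset.card_le_card hsub).trans ((Finset.card_union_le _ _).trans ?_)
  have h1 := Finset.card_image_le (s := Finset.range (R + 1)) (f := fun x => cshift v x)
  have h2 := Finset.card_image_le (s := Finset.range (R + 1)) (f := fun x => cshift v (m - x))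
  rw [Finset.card_range] at h1 h2
  omega

lemma ball_card {m : ℕ} (v : Node m) (R : ℕ) :
    (Finset.univ.filter (fun w : Node m => torusDist w v ≤ R)).card ≤ (2 * (R + 1)) ^ 2 := by
  have hsub : Finset.univ.filter (fun w : Node m => torusDist w v ≤ R) ⊆
      (Finset.univ.filter (fun a : Fin m => cdist a v.1 ≤ R)) ×ˢ
      (Finset.univ.filter (fun a : Fin m => cdist a v.2 ≤ R)) := by
    intro w hw
    have hw' : cdist w.1 v.1 + cdist w.2 v.2 ≤ R := by
      exact (Finset.mem_filter.1 hw).2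
    simp only [Finset.mem_filter, Finset.mem_univ, true_and, Finset.mem_product]
    constructor <;> omega
  refine (Finset.card_le_card hsub).trans ?_
  rw [Finset.card_product, sq]
  exact Nat.mul_le_mul (cball_card _ _) (cball_card _ _)

/-- coordinate in the `a`-th block of length `d` -/
def bcoord {m d : ℕ} (a : Fin (m / d)) (x : Fin d) : Fin m :=
  ⟨a.val * d + x.val, by
    have h1 : (a.val + 1) * d ≤ m :=
      (Nat.mul_le_mul_right d a.2).trans (Nat.div_mul_le_self m d)
    have := x.2
    rw [add_mul, one_mul] at h1
    omega⟩

def bnode {m d : ℕ} (t : (Fin (m / d) × Fin (m / d)) × (Fin d × Fin d)) : Node m :=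
  (bcoord t.1.1 t.2.1, bcoord t.1.2 t.2.2)

lemma bcoord_inj {m d : ℕ} {a a' : Fin (m / d)} {x x' : Fin d} (h : bcoord a x = bcoord a' x') :
    a = a' ∧ x = x' := by
  have h' : a.val * d + x.val = a'.val * d + x'.val := congrArg Fin.val h
  have hx := x.2
  have hx' := x'.2
  have hd : 0 < d := by omega
  have h1 : a.val = a'.val := by
    have := congrArg (· / d) h'
    simpa [Nat.add_div_of_dvd_right, Nat.mul_div_cancel _ hd, Nat.div_eq_of_lt hx,
      Nat.div_eq_of_lt hx'] using this
  refine ⟨Fin.ext h1, Fin.ext ?_⟩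
  rw [h1] at h'
  omega

lemma bnode_inj {m d : ℕ} : Function.Injective (bnode (m := m) (d := d)) := by
  rintro ⟨⟨a, b⟩, ⟨x, y⟩⟩ ⟨⟨a', b'⟩, ⟨x', y'⟩⟩ h
  have h1 := bcoord_inj (congrArg Prod.fst h)
  have h2 := bcoord_inj (congrArg Prod.snd h)
  simp only at h1 h2
  rw [h1.1, h1.2, h2.1, h2.2]

def snode {m D : ℕ} (w : Node m) (x : Fin D × Fin D) : Node m :=
  (cshift w.1 x.1.val, cshift w.2 x.2.val)

lemma snode_inj {m D : ℕ} (hD : D ≤ m) (w : Node m) : Function.Injective (snode (D := D) w) := by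
  rintro ⟨x, y⟩ ⟨x', y'⟩ h
  have := x.2
  have := y.2
  have := x'.2
  have := y'.2
  have h1 := cshift_inj _ _ _ (by omega) (by omega) (congrArg Prod.fst h)
  have h2 := cshift_inj _ _ _ (by omega) (by omega) (congrArg Prod.snd h)
  exact Prod.ext (Fin.ext h1) (Fin.ext h2)

def ctr (s : ℕ) : Fin (2 * s + 1) := ⟨s, by omega⟩

lemma near_block {m s : ℕ} (a : Fin (m / (2 * s + 1))) (u : Fin m)
    (h : cdist (bcoord a (ctr s)) u ≤ s) : ∃ x, bcoord a x = u := by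
  have h1 : (a.val + 1) * (2 * s + 1) ≤ m :=
      (Nat.mul_le_mul_right _ a.2).trans (Nat.div_mul_le_self m _)
  have h2 : (bcoord a (ctr s)).val = a.val * (2 * s + 1) + s := rfl
  rw [add_mul, one_mul] at h1
  rw [cdist_eq, h2] at h
  have hu := u.2
  have h3 : a.val * (2 * s + 1) ≤ u.val ∧ u.val < a.val * (2 * s + 1) + (2 * s + 1) := by
    generalize a.val * (2 * s + 1) = z at *
    split_ifs at h <;> omega
  refine ⟨⟨u.val - a.val * (2 * s + 1), by omega⟩, ?_⟩
  apply Fin.ext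
  change a.val * (2 * s + 1) + (u.val - a.val * (2 * s + 1)) = u.val
  omega

lemma deterministic {m M K : ℕ} (i0 : Fin M) (s D : ℕ) (hD : D ≤ m) (hD1 : 1 ≤ D)
    (ω : Placement m M K)
    (hup : ∀ (w : Node m) (j : Fin K), ∃ x : Fin D × Fin D, ∃ i, ω (snode w x) i = j)
    (t : Fin (m / (2 * s + 1)) × Fin (m / (2 * s + 1)))
    (hlow : ∀ b, b ≠ (ctr s, ctr s) → ∀ i, ω (bnode (t, b)) i ≠ ω (bnode (t, (ctr s, ctr s))) i0) :
    ∃ (j : Fin K) (A : Node m → Node m) (v : Node m), nearestAssignment ω j A ∧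
      s ^ 2 ≤ 16 * (cell A v).card ∧ (cell A v).card ≤ 36 * D ^ 2 := by
  set v := bnode (t, (ctr s, ctr s)) with hv
  set j := ω v i0 with hj
  have hvc : cached ω v j := ⟨i0, rfl⟩
  have hex : ∀ w : Node m, ∃ z, cached ω z j ∧ ∀ u, cached ω u j → torusDist w z ≤ torusDist w u := by
    intro w
    obtain ⟨z, hz, hz'⟩ := Finset.exists_min_image (Finset.univ.filter (fun u => cached ω u j))
      (fun u => torusDist w u) ⟨v, by simp [hvc]⟩
    refine ⟨z, by simpa using hz, fun u hu => hz' u (by simpa using hu)⟩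
  choose A hA using hex
  refine ⟨j, A, v, hA, ?_, ?_⟩
  · have hfar : ∀ u, cached ω u j → u ≠ v → s < torusDist v u := by
      intro u hu huv
      by_contra hcon
      push Not at hcon
      have e1 : cdist (bcoord t.1 (ctr s)) u.1 ≤ s :=
        (Nat.le_add_right _ _).trans hcon
      have e2 : cdist (bcoord t.2 (ctr s)) u.2 ≤ s :=
        (Nat.le_add_left _ _).trans hcon
      obtain ⟨x, hx⟩ := near_block _ _ e1
      obtain ⟨y, hy⟩ := near_block _ _ e2
      have hu' : u = bnode (t, (x, y)) := Prod.ext hx.symm hy.symm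
      obtain ⟨i, hi⟩ := hu
      refine hlow (x, y) ?_ i (by rw [← hu']; exact hi)
      intro h
      apply huv
      rw [hu', h]
    have hsm : s < m := by
      have := t.1.pos
      have := Nat.div_mul_le_self m (2 * s + 1)
      have : 1 * (2 * s + 1) ≤ m / (2 * s + 1) * (2 * s + 1) := Nat.mul_le_mul_right _ ‹_›
      omega
    have hsub : Finset.univ.image (snode (D := s / 4 + 1) v) ⊆ cell A v := by
      intro w hw
      simp only [Finset.mem_image, Finset.mem_univ, true_and] at hw
      obtain ⟨x, rfl⟩ := hw
      have hx1 := x.1.2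
      have hx2 := x.2.2
      have g1 := cdist_cshift v.1 x.1.val (by omega)
      have g2 := cdist_cshift v.2 x.2.val (by omega)
      have g : torusDist v (snode v x) ≤ x.1.val + x.2.val := by
        unfold torusDist snode; simp only; omega
      simp only [cell, Finset.mem_filter, Finset.mem_univ, true_and]
      by_contra hne
      have k1 := hfar _ (hA (snode v x)).1 hne
      have k2 := (hA (snode v x)).2 v hvc
      have k3 := torusDist_triangle v (snode v x) (A (snode v x))
      rw [torusDist_comm (snode v x) v] at k2
      omega
    have hc := Finset.card_le_card hsub
    rw [Finset.card_image_of_injective _ (snode_inj (by omega) v), Finset.card_univ,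
      Fintype.card_prod, Fintype.card_fin] at hc
    have : s ≤ 4 * (s / 4 + 1) := by omega
    nlinarith
  · have hsub : cell A v ⊆ Finset.univ.filter (fun w : Node m => torusDist w v ≤ 2 * D) := by
      intro w hw
      simp only [cell, Finset.mem_filter, Finset.mem_univ, true_and] at hw ⊢
      obtain ⟨x, i, hi⟩ := hup w j
      have k := (hA w).2 _ ⟨i, hi⟩
      rw [hw] at k
      have hx1 := x.1.2
      have hx2 := x.2.2
      have g1 := cdist_cshift w.1 x.1.val (by omega)
      have g2 := cdist_cshift w.2 x.2.val (by omega)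
      have g : torusDist w (snode w x) ≤ x.1.val + x.2.val := by
        unfold torusDist snode; simp only; omega
      omega
    refine (Finset.card_le_card hsub).trans ((ball_card v _).trans ?_)
    nlinarith
lemma prob_bound (m M K s D : ℕ) (hM : 1 ≤ M) (hK : 1 ≤ K) (hD : D ≤ m) (hD1 : 1 ≤ D) :
    1 - ((m : ℝ) ^ 2 * K) * (1 - 1 / (K : ℝ)) ^ (M * D ^ 2)
      - (1 - (1 - 1 / (K : ℝ)) ^ (M * (2 * s + 1) ^ 2)) ^ ((m / (2 * s + 1)) ^ 2) ≤
    uP {ω : Placement m M K | ∃ (j : Fin K) (A : Node m → Node m) (v : Node m),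
      nearestAssignment ω j A ∧ s ^ 2 ≤ 16 * (cell A v).card ∧ (cell A v).card ≤ 36 * D ^ 2} := by
  set E : Set (Placement m M K) := {ω | ∃ (j : Fin K) (A : Node m → Node m) (v : Node m),
      nearestAssignment ω j A ∧ s ^ 2 ≤ 16 * (cell A v).card ∧ (cell A v).card ≤ 36 * D ^ 2} with hE
  have hne : Nonempty (Fin K) := ⟨⟨0, hK⟩⟩
  let i0 : Fin M := ⟨0, hM⟩
  let U : Set (Placement m M K) := ⋃ p : Node m × Fin K,
    {ω | (ω ∘ snode (D := D) p.1) ∈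
      {η : Fin D × Fin D → Fin M → Fin K | ∀ b i, η b i ≠ p.2}}
  let I : Set (Fin (2 * s + 1) × Fin (2 * s + 1) → Fin M → Fin K) :=
    {η | ∀ b, b ≠ (ctr s, ctr s) → ∀ i, η b i ≠ η (ctr s, ctr s) i0}
  let V : Set (Placement m M K) :=
    {ω | ∀ t : Fin (m / (2 * s + 1)) × Fin (m / (2 * s + 1)), (fun b => ω (bnode (t, b))) ∈ Iᶜ}
  have hsub : Eᶜ ⊆ U ∪ V := by
    intro ω hω
    by_contra hcon
    apply hω
    simp only [Set.mem_union, not_or] at hcon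
    obtain ⟨h1, h2⟩ := hcon
    simp only [V, Set.mem_ofPred_eq, not_forall, Set.mem_compl_iff, not_not] at h2
    obtain ⟨t, ht⟩ := h2
    refine deterministic i0 s D hD hD1 ω ?_ t ht
    intro w j
    by_contra hc
    push Not at hc
    exact h1 (Set.mem_iUnion.2 ⟨(w, j), hc⟩)
  have hU : uP U ≤ ((m : ℝ) ^ 2 * K) * (1 - 1 / (K : ℝ)) ^ (M * D ^ 2) := by
    refine (uP_iUnion _).trans ?_
    have : ∀ p : Node m × Fin K, uP {ω : Placement m M K | (ω ∘ snode (D := D) p.1) ∈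
      {η : Fin D × Fin D → Fin M → Fin K | ∀ b i, η b i ≠ p.2}} = (1 - 1 / (K : ℝ)) ^ (M * D ^ 2) := by
      intro p
      rw [uP_restrict _ (snode_inj hD p.1), uP_avoid_box _ _ _ hK]
      simp [sq]
    simp_rw [this]
    simp [sq]
  have hV : uP V ≤ (1 - (1 - 1 / (K : ℝ)) ^ (M * (2 * s + 1) ^ 2)) ^ ((m / (2 * s + 1)) ^ 2) := by
    have h1 : uP V = uP Iᶜ ^ ((m / (2 * s + 1)) ^ 2) := by
      rw [uP_blocks _ bnode_inj]
      simp [sq]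
    have h2 := uP_isolated (Fin (2 * s + 1) × Fin (2 * s + 1)) (ctr s, ctr s) M K hK i0
    rw [h1]
    apply pow_le_pow_left₀ (uP_nonneg _)
    rw [uP_compl]
    have h3 : Fintype.card (Fin (2 * s + 1) × Fin (2 * s + 1)) = (2 * s + 1) ^ 2 := by simp [sq]
    rw [h3] at h2
    exact sub_le_sub_left h2 _
  have h := (uP_mono hsub).trans (uP_union U V)
  rw [uP_compl] at h
  linarith

lemma K_lower (K : ℕ) (hK : 2 ≤ K) : Real.exp (-(2 / (K : ℝ))) ≤ 1 - 1 / (K : ℝ) := by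
  have hK' : (2 : ℝ) ≤ K := by exact_mod_cast hK
  rw [Real.exp_neg]
  have h1 := Real.add_one_le_exp (2 / (K : ℝ))
  have h2 : (0 : ℝ) < 2 / K + 1 := by positivity
  refine (inv_anti₀ h2 h1).trans ?_
  rw [inv_le_iff_one_le_mul₀ h2]
  have : 1 / (K : ℝ) ≤ 1 / 2 := one_div_le_one_div_of_le (by norm_num) hK'
  have h0 : 0 < 1 / (K : ℝ) := by positivity
  rw [show (2 : ℝ) / K = 2 * (1 / K) by ring]
  nlinarith

lemma K_upper (K : ℕ) : 1 - 1 / (K : ℝ) ≤ Real.exp (-(1 / (K : ℝ))) := by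
  have := Real.add_one_le_exp (-(1 / (K : ℝ)))
  linarith

set_option maxHeartbeats 1000000 in
/-- numerical bound, for one `m` -/
lemma numeric (m M K : ℕ) (ε κ N L : ℝ) (hM : 1 ≤ M) (hε0 : 0 < ε)
    (hκ : κ = ε / (36 * M)) (hκ1 : κ ≤ 1) (hN : N = (m : ℝ) ^ 2) (hN0 : 1 < N)
    (hL : L = Real.log N) (hK : 2 ≤ K)
    (hKN : (K : ℝ) ≤ 2 * N ^ (1 - ε)) (hKN' : (K : ℝ) ≤ N) (h4 : 4 ≤ κ * K * L)
    (hbig : 36 * (K : ℝ) * L ≤ N) :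
    ∃ s D : ℕ, D ≤ m ∧ 1 ≤ D ∧ κ * K * L ≤ 4 * (s : ℝ) ^ 2 ∧ (D : ℝ) ^ 2 ≤ 12 * K * L ∧
      ((m : ℝ) ^ 2 * K) * (1 - 1 / (K : ℝ)) ^ (M * D ^ 2) ≤ 1 / N ∧
      (1 - (1 - 1 / (K : ℝ)) ^ (M * (2 * s + 1) ^ 2)) ^ ((m / (2 * s + 1)) ^ 2) ≤
        Real.exp (-(N ^ (ε / 2) / (72 * κ * L))) := by
  have hM' : (1 : ℝ) ≤ M := by exact_mod_cast hM
  have hK' : (2 : ℝ) ≤ K := by exact_mod_cast hK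
  have hLpos : 0 < L := by rw [hL]; exact Real.log_pos hN0
  have hκ0 : 0 < κ := by rw [hκ]; positivity
  have hKL : κ * K * L ≤ K * L := by
    have : 0 ≤ (K : ℝ) * L := by positivity
    nlinarith
  have hm0 : (0 : ℝ) ≤ m := by positivity
  have hexpL : Real.exp L = N := by rw [hL, Real.exp_log (by linarith)]
  -- D
  set x := Real.sqrt (3 * K * L) with hx
  have hx2 : x ^ 2 = 3 * K * L := Real.sq_sqrt (by positivity)
  have hx0 : 0 ≤ x := Real.sqrt_nonneg _
  have hx1 : 1 ≤ x := by nlinarith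
  -- s
  set y := Real.sqrt (κ * K * L) with hy
  have hy2 : y ^ 2 = κ * K * L := Real.sq_sqrt (by positivity)
  have hy0 : 0 ≤ y := Real.sqrt_nonneg _
  have hy1 : 2 ≤ y := by nlinarith
  have hDx : (⌈x⌉₊ : ℝ) ≤ 2 * x := by
    have := Nat.ceil_lt_add_one hx0; linarith
  have hDx' : x ≤ (⌈x⌉₊ : ℝ) := Nat.le_ceil x
  have hsy : (⌊y⌋₊ : ℝ) ≤ y := Nat.floor_le hy0
  have hsy' : y ≤ 2 * (⌊y⌋₊ : ℝ) := by
    have := Nat.lt_floor_add_one y; linarith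
  refine ⟨⌊y⌋₊, ⌈x⌉₊, ?_, ?_, ?_, ?_, ?_, ?_⟩
  · have : (⌈x⌉₊ : ℝ) ≤ m := by
      apply hDx.trans
      apply le_of_sq_le_sq _ hm0
      nlinarith
    exact_mod_cast this
  · have : (1 : ℝ) ≤ (⌈x⌉₊ : ℝ) := by linarith
    exact_mod_cast this
  · nlinarith
  · nlinarith
  · have hD2 : 3 * K * L ≤ (⌈x⌉₊ : ℝ) ^ 2 := by nlinarith
    have hk0 : 0 ≤ 1 - 1 / (K : ℝ) := (Real.exp_pos _).le.trans (K_lower K hK)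
    have h1 : (1 - 1 / (K : ℝ)) ^ (M * ⌈x⌉₊ ^ 2) ≤ 1 / N ^ 3 := by
      refine (pow_le_pow_left₀ hk0 (K_upper K) _).trans ?_
      rw [← Real.exp_nat_mul, ← hexpL, ← Real.exp_nat_mul, one_div (Real.exp _), ← Real.exp_neg, Real.exp_le_exp]
      push_cast
      have : 3 * L ≤ (⌈x⌉₊ : ℝ) ^ 2 * (1 / K) := by
        rw [mul_one_div, le_div_iff₀ (by positivity)]; linarith
      have h0 : 0 ≤ (⌈x⌉₊ : ℝ) ^ 2 * (1 / K) := by positivity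
      nlinarith
    rw [← hN]
    have hNp : 0 < N := by linarith
    calc N * K * (1 - 1 / (K : ℝ)) ^ (M * ⌈x⌉₊ ^ 2) ≤ N * N * (1 / N ^ 3) := by gcongr
      _ = 1 / N := by field_simp
  · set s := ⌊y⌋₊
    have hNp : 0 < N := by linarith
    have hs1 : (1 : ℝ) ≤ s := by linarith
    set d : ℕ := 2 * s + 1 with hd
    have hdR : (d : ℝ) = 2 * s + 1 := by rw [hd]; push_cast; ring
    have hd1 : (d : ℝ) ≤ 3 * y := by linarith
    have hd2 : (d : ℝ) ^ 2 ≤ 9 * (κ * K * L) := by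
      calc (d : ℝ) ^ 2 ≤ (3 * y) ^ 2 := by gcongr
        _ = 9 * (κ * K * L) := by rw [← hy2]; ring
    have hdpos : 0 < d := by omega
    have hdm : d ≤ m := by
      have : (d : ℝ) ≤ m := by
        apply le_of_sq_le_sq _ hm0
        have : 0 ≤ (K : ℝ) * L := by positivity
        rw [← hN]
        linarith
      exact_mod_cast this
    set p := (1 - 1 / (K : ℝ)) ^ (M * d ^ 2) with hp
    have hk1 : 1 - 1 / (K : ℝ) ≤ 1 := by
      have : 0 ≤ 1 / (K : ℝ) := by positivity
      linarith
    have hk0 : 0 ≤ 1 - 1 / (K : ℝ) := (Real.exp_pos _).le.trans (K_lower K hK)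
    have hp1 : p ≤ 1 := pow_le_one₀ hk0 hk1
    have hpl : N ^ (-(ε / 2)) ≤ p := by
      refine le_trans ?_ (pow_le_pow_left₀ (Real.exp_pos _).le (K_lower K hK) _)
      rw [← Real.exp_nat_mul, Real.rpow_def_of_pos hNp, Real.exp_le_exp, ← hL]
      push_cast
      have h1 : (d : ℝ) ^ 2 * (2 / K) ≤ 18 * κ * L := by
        rw [mul_div_assoc', div_le_iff₀ (by positivity)]; nlinarith
      have h2 : (M : ℝ) * ((d : ℝ) ^ 2 * (2 / K)) ≤ M * (18 * κ * L) := by gcongr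
      have h3 : (M : ℝ) * (18 * κ * L) = L * (ε / 2) := by
        rw [hκ]; field_simp; norm_num
      nlinarith
    have hT : N ^ ε / (72 * κ * L) ≤ (((m / d) ^ 2 : ℕ) : ℝ) := by
      have hq : (m : ℝ) ≤ 2 * d * ((m / d : ℕ) : ℝ) := by
        have h1 : 1 ≤ m / d := (Nat.one_le_div_iff hdpos).2 hdm
        have h2 := Nat.div_add_mod m d
        have h3 := Nat.mod_lt m hdpos
        have h4 : m ≤ 2 * d * (m / d) := by nlinarith
        exact_mod_cast h4
      have hq2 : N ≤ 4 * (d : ℝ) ^ 2 * ((m / d : ℕ) : ℝ) ^ 2 := by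
        rw [hN]
        calc (m : ℝ) ^ 2 ≤ (2 * d * ((m / d : ℕ) : ℝ)) ^ 2 := by gcongr
          _ = _ := by ring
      push_cast at hq2 ⊢
      set q := ((m / d : ℕ) : ℝ) ^ 2
      have hq0 : 0 ≤ q := by positivity
      have h5 : N ≤ 72 * κ * L * q * N ^ (1 - ε) := by
        calc N ≤ 4 * (9 * (κ * K * L)) * q := by
                refine hq2.trans ?_
                gcongr
          _ = 36 * κ * L * q * K := by ring
          _ ≤ 36 * κ * L * q * (2 * N ^ (1 - ε)) := by gcongr
          _ = _ := by ring
      have h6 : N ^ ε * N ^ (1 - ε) = N := by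
        rw [← Real.rpow_add hNp]; simp
      have h7 : 0 < N ^ (1 - ε) := Real.rpow_pos_of_pos hNp _
      rw [div_le_iff₀ (by positivity)]
      refine le_of_mul_le_mul_right ?_ h7
      rw [h6]; linarith
    refine (pow_le_pow_left₀ (by linarith) (Real.one_sub_le_exp_neg p) _).trans ?_
    rw [← Real.exp_nat_mul, Real.exp_le_exp]
    have h8 : N ^ (ε / 2) / (72 * κ * L) ≤ (((m / d) ^ 2 : ℕ) : ℝ) * p := by
      calc N ^ (ε / 2) / (72 * κ * L) = N ^ ε / (72 * κ * L) * N ^ (-(ε / 2)) := by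
            rw [div_mul_eq_mul_div, ← Real.rpow_add hNp]; ring_nf
        _ ≤ _ := by gcongr
    linarith

theorem asymp (ε κ : ℝ) (hε0 : 0 < ε) (hε1 : ε < 1) (hκ : 0 < κ) :
    ∀ᶠ N : ℝ in atTop, 1 < N ∧ 2 ≤ N ^ (1 - ε) ∧ 4 ≤ κ * N ^ (1 - ε) * Real.log N ∧
      72 * Real.log N ≤ N ^ ε ∧ 2 * N ^ (1 - ε) ≤ N := by
  have t1 := tendsto_rpow_atTop (show 0 < 1 - ε by linarith)
  have t2 := tendsto_rpow_atTop hε0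
  have t3 := (isLittleO_log_rpow_atTop hε0).bound (show (0 : ℝ) < 1 / 72 by norm_num)
  filter_upwards [eventually_gt_atTop 1, t1.eventually_ge_atTop 2, t1.eventually_ge_atTop (4 / κ),
    Real.tendsto_log_atTop.eventually_ge_atTop 1, t3, t2.eventually_ge_atTop 2] with N h1 h2 h3 h4 h5 h6
  have hNp : 0 < N := by linarith
  refine ⟨h1, h2, ?_, ?_, ?_⟩
  · rw [div_le_iff₀ hκ] at h3
    nlinarith
  · rw [Real.norm_of_nonneg (by linarith), Real.norm_of_nonneg (by linarith)] at h5
    linarith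
  · have h7 : N ^ ε * N ^ (1 - ε) = N := by
      rw [← Real.rpow_add hNp]; simp
    nlinarith

lemma tend_exp (ε κ : ℝ) (hε0 : 0 < ε) (hκ : 0 < κ) :
    Tendsto (fun N : ℝ => Real.exp (-(N ^ (ε / 2) / (72 * κ * Real.log N)))) atTop (nhds 0) := by
  apply Real.tendsto_exp_neg_atTop_nhds_zero.comp
  have h := (isLittleO_log_rpow_atTop (show 0 < ε / 4 by linarith)).bound
    (show (0 : ℝ) < 1 / (72 * κ) by positivity)
  refine tendsto_atTop_mono' _ ?_ (tendsto_rpow_atTop (show 0 < ε / 4 by linarith))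
  filter_upwards [h, eventually_gt_atTop 1] with N h1 h2
  have hl := Real.log_pos h2
  have hNp : 0 < N := by linarith
  have hp := Real.rpow_pos_of_pos hNp (ε / 4)
  rw [Real.norm_of_nonneg hl.le, Real.norm_of_nonneg hp.le, one_div_mul_eq_div, le_div_iff₀ (by positivity)] at h1
  rw [le_div_iff₀ (by positivity), show ε / 2 = ε / 4 + ε / 4 by ring, Real.rpow_add hNp]
  nlinarith

/-- Suppose `K = ⌈n^(1-ε)⌉` for a constant `0 < ε < 1` and `M` is a
fixed positive integer.  Under the Uniform popularity distribution, with probability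
`1 - o(1)` over the random cache placement there is a file `W_j` whose Voronoi
tessellation contains a cell of size `Θ(K·log n/M)`. -/
theorem statement1 (ε : ℝ) (hε0 : 0 < ε) (hε1 : ε < 1) (M : ℕ) (hM : 1 ≤ M) :
    ∃ c₁ c₂ : ℝ, 0 < c₁ ∧ 0 < c₂ ∧
      Tendsto (fun m : ℕ =>
        unifProb {ω : Placement m M (Kf ε (m ^ 2)) |
          ∃ (j : Fin (Kf ε (m ^ 2))) (A : Node m → Node m) (v : Node m),
            nearestAssignment ω j A ∧
            c₁ * (Kf ε (m ^ 2) : ℝ) * Real.log ((m ^ 2 : ℕ) : ℝ) / (M : ℝ) ≤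
              ((cell A v).card : ℝ) ∧
            ((cell A v).card : ℝ) ≤
              c₂ * (Kf ε (m ^ 2) : ℝ) * Real.log ((m ^ 2 : ℕ) : ℝ) / (M : ℝ)})
        atTop (nhds 1) := by

  have hM' : (1 : ℝ) ≤ M := by exact_mod_cast hM
  set κ : ℝ := ε / (36 * M) with hκ
  have hκ0 : 0 < κ := by positivity
  have hκ1 : κ ≤ 1 := by
    rw [hκ, div_le_one (by positivity)]; linarith
  refine ⟨κ * M / 64, 432 * M, by positivity, by positivity, ?_⟩
  have tN : Tendsto (fun m : ℕ => ((m : ℝ) ^ 2)) atTop atTop :=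
    (tendsto_pow_atTop (by norm_num)).comp tendsto_natCast_atTop_atTop
  have tlow : Tendsto (fun m : ℕ => 1 - 1 / ((m : ℝ) ^ 2) -
      Real.exp (-(((m : ℝ) ^ 2) ^ (ε / 2) / (72 * κ * Real.log ((m : ℝ) ^ 2))))) atTop (nhds 1) := by
    have h1 := (tendsto_inv_atTop_zero.comp tN)
    have h2 := (tend_exp ε κ hε0 hκ0).comp tN
    have h3 := (tendsto_const_nhds (x := (1 : ℝ))).sub h1 |>.sub h2
    simpa [Function.comp_def] using h3
  refine tendsto_of_tendsto_of_tendsto_of_le_of_le' tlow tendsto_const_nhds ?_ ?_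
  swap
  · refine Eventually.of_forall fun m => ?_
    rw [unifProb_eq]
    exact uP_le_one _
  filter_upwards [tN.eventually (asymp ε κ hε0 hε1 hκ0)] with m hm
  obtain ⟨h1, h2, h3, h4, h5⟩ := hm
  rw [unifProb_eq]
  have hcast : ((m ^ 2 : ℕ) : ℝ) = (m : ℝ) ^ 2 := by push_cast; ring
  rw [hcast]
  have hKdef : Kf ε (m ^ 2) = ⌈((m : ℝ) ^ 2) ^ (1 - ε)⌉₊ := by
    unfold Kf; rw [hcast]
  generalize Kf ε (m ^ 2) = K at *
  set N : ℝ := (m : ℝ) ^ 2 with hN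
  set L := Real.log N with hL
  have hLpos : 0 < L := Real.log_pos h1
  have hKge : N ^ (1 - ε) ≤ K := by rw [hKdef]; exact Nat.le_ceil _
  have hKle : (K : ℝ) ≤ 2 * N ^ (1 - ε) := by
    have : (K : ℝ) < N ^ (1 - ε) + 1 := by rw [hKdef]; exact Nat.ceil_lt_add_one (by linarith)
    linarith
  have hK2 : 2 ≤ K := by
    have : (2 : ℝ) ≤ K := by linarith
    exact_mod_cast this
  have h6 : 4 ≤ κ * K * L := by
    refine h3.trans ?_
    gcongr
  have h7 : 36 * (K : ℝ) * L ≤ N := by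
    have hNp : 0 < N := by linarith
    have h7 : N ^ ε * N ^ (1 - ε) = N := by
      rw [← Real.rpow_add hNp]; simp
    calc 36 * (K : ℝ) * L ≤ 36 * (2 * N ^ (1 - ε)) * L := by gcongr
      _ = (72 * L) * N ^ (1 - ε) := by ring
      _ ≤ N ^ ε * N ^ (1 - ε) := by gcongr
      _ = N := h7
  obtain ⟨s, D, hD, hD1, hs, hD2, e1, e2⟩ := numeric m M K ε κ N L hM hε0 hκ hκ1 hN h1 hL hK2
    hKle (by linarith) h6 h7
  have hpb := prob_bound m M K s D hM (by omega) hD hD1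
  refine le_trans (by linarith) (hpb.trans (uP_mono ?_))
  rintro ω ⟨j, A, v, hA, g1, g2⟩
  refine ⟨j, A, v, hA, ?_, ?_⟩
  · have g1' : (s : ℝ) ^ 2 ≤ 16 * ((cell A v).card : ℝ) := by exact_mod_cast g1
    have : κ * M / 64 * K * L / M = κ * K * L / 64 := by field_simp
    rw [this]; linarith
  · have g2' : ((cell A v).card : ℝ) ≤ 36 * (D : ℝ) ^ 2 := by exact_mod_cast g2
    have : 432 * M * K * L / M = 432 * (K * L) := by field_simp
    rw [this]; linarith
end

section
/- Suppose K = ⌈n^{1−ε}⌉ for a constant 0 < ε < 1 and M is a fixed positive integer constant. Then, under the Uniform popularity distribution, the maximum load L of Strategy I is Θ(log n) with high probability: there exist constants c_1, c_2, c > 0 such that for all sufficiently large n, with probability at least 1 − n^{−c} (over the random placement, the random requests, and the random tie-breaking), c_1·log n ≤ L ≤ c_2·log n. -/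
open scoped Classical BigOperators
open Filter

/-- `A` assigns each of the `n'` requests (request `t` originating at node `(ρ t).1`
and asking for file `(ρ t).2`) to a nearest node that cached the requested file;
quantifying over all such `A` covers every random tie-breaking of Strategy I. -/
def validAssign {m M K n' : ℕ} (ω : Placement m M K) (ρ : Fin n' → Node m × Fin K)
    (A : Fin n' → Node m) : Prop :=
  ∀ t, cached ω (A t) (ρ t).2 ∧
    ∀ v, cached ω v (ρ t).2 → torusDist (ρ t).1 (A t) ≤ torusDist (ρ t).1 v

/-- Maximum load: the maximum over nodes of the number of requests assigned to it. -/
noncomputable def maxLoad {m n' : ℕ} (A : Fin n' → Node m) : ℕ :=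
  Finset.univ.sup fun v : Node m => (Finset.univ.filter fun t => A t = v).card

lemma up_eq {Ω : Type*} [Fintype Ω] (E : Set Ω) (F : Finset Ω) (h : ∀ ω, ω ∈ F ↔ ω ∈ E) :
    unifProb E = (F.card : ℝ) / (Fintype.card Ω : ℝ) := by
  unfold unifProb
  congr 3
  ext ω
  simp [h]

lemma up_nonneg {Ω : Type*} [Fintype Ω] (E : Set Ω) : 0 ≤ unifProb E := by
  unfold unifProb; positivity

lemma up_mono {Ω : Type*} [Fintype Ω] {E F : Set Ω} (h : E ⊆ F) : unifProb E ≤ unifProb F := by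
  unfold unifProb
  gcongr

lemma up_compl {Ω : Type*} [Fintype Ω] [Nonempty Ω] (E : Set Ω) :
    unifProb Eᶜ = 1 - unifProb E := by
  unfold unifProb
  have h : (Fintype.card Ω : ℝ) ≠ 0 := by exact_mod_cast Fintype.card_ne_zero
  have h2 := Finset.card_filter_add_card_filter_not (s := (Finset.univ : Finset Ω))
    (fun ω => ω ∈ E)
  have h3 : ((Finset.univ.filter (fun ω => ω ∈ E)).card : ℝ) +
      ((Finset.univ.filter (fun ω => ¬ ω ∈ E)).card : ℝ) = Fintype.card Ω := by
    exact_mod_cast h2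
  field_simp
  simp only [Set.mem_compl_iff]
  linarith

lemma up_union_le {Ω ι : Type*} [Fintype Ω] (T : Finset ι) (E : ι → Set Ω) :
    unifProb {ω | ∃ i ∈ T, ω ∈ E i} ≤ ∑ i ∈ T, unifProb (E i) := by
  rw [up_eq {ω | ∃ i ∈ T, ω ∈ E i} (T.biUnion (fun i => Finset.univ.filter (fun ω => ω ∈ E i)))
    (by intro ω; simp)]
  unfold unifProb
  rw [← Finset.sum_div]
  gcongr
  exact_mod_cast Finset.card_biUnion_le

lemma up_or_le {Ω : Type*} [Fintype Ω] (E F : Set Ω) :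
    unifProb (E ∪ F) ≤ unifProb E + unifProb F := by
  rw [up_eq (E ∪ F) (Finset.univ.filter (fun ω => ω ∈ E) ∪ Finset.univ.filter (fun ω => ω ∈ F))
    (by intro ω; simp)]
  unfold unifProb
  rw [← add_div]
  gcongr
  exact_mod_cast Finset.card_union_le _ _

lemma up_prod {Ω₁ Ω₂ : Type*} [Fintype Ω₁] [Fintype Ω₂] [Nonempty Ω₁] [Nonempty Ω₂]
    (G : Set Ω₁) (H : Ω₁ → Set Ω₂) (d₁ d₂ : ℝ) (hd₂ : 0 ≤ d₂) (h1 : unifProb Gᶜ ≤ d₁)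
    (h2 : ∀ ω ∈ G, unifProb (H ω)ᶜ ≤ d₂) :
    1 - (d₁ + d₂) ≤ unifProb {x : Ω₁ × Ω₂ | x.1 ∈ G ∧ x.2 ∈ H x.1} := by
  have key : unifProb {x : Ω₁ × Ω₂ | x.1 ∈ G ∧ x.2 ∈ H x.1}ᶜ ≤ d₁ + d₂ := by
    have hs : {x : Ω₁ × Ω₂ | x.1 ∈ G ∧ x.2 ∈ H x.1}ᶜ ⊆
        {x : Ω₁ × Ω₂ | x.1 ∈ Gᶜ} ∪ {x : Ω₁ × Ω₂ | x.1 ∈ G ∧ x.2 ∈ (H x.1)ᶜ} := by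
      intro x hx
      by_cases hg : x.1 ∈ G
      · right
        refine ⟨hg, ?_⟩
        intro h
        exact hx ⟨hg, h⟩
      · left; exact hg
    refine (up_mono hs).trans ((up_or_le _ _).trans ?_)
    have c1 : (0 : ℝ) < Fintype.card Ω₁ := by exact_mod_cast Fintype.card_pos
    have c2 : (0 : ℝ) < Fintype.card Ω₂ := by exact_mod_cast Fintype.card_pos
    apply add_le_add
    · refine le_trans (le_of_eq ?_) h1
      rw [up_eq {x : Ω₁ × Ω₂ | x.1 ∈ Gᶜ} ((Finset.univ.filter (fun ω => ω ∈ Gᶜ)) ×ˢ Finset.univ)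
        (by intro x; simp), up_eq Gᶜ (Finset.univ.filter (fun ω => ω ∈ Gᶜ)) (by intro x; simp)]
      rw [Finset.card_product, Fintype.card_prod, Finset.card_univ]
      push_cast
      field_simp
    · rw [up_eq {x : Ω₁ × Ω₂ | x.1 ∈ G ∧ x.2 ∈ (H x.1)ᶜ}
        ((Finset.univ.filter (fun ω => ω ∈ G)).biUnion (fun ω =>
          ((Finset.univ.filter (fun y => y ∈ (H ω)ᶜ)).map ⟨fun y => (ω, y),
            fun a b h => (Prod.mk.inj h).2⟩)))
        (by
          rintro ⟨a, b⟩
          simp only [Finset.mem_biUnion, Finset.mem_filter, Finset.mem_univ, true_and,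
            Finset.mem_map, Set.mem_ofPred_eq]
          constructor
          · rintro ⟨_, h1, _, h2, h3⟩; cases h3; exact ⟨h1, h2⟩
          · rintro ⟨h1, h2⟩; exact ⟨a, h1, b, h2, rfl⟩)]
      rw [div_le_iff₀ (by rw [Fintype.card_prod]; push_cast; positivity)]
      refine le_trans (Nat.cast_le.mpr Finset.card_biUnion_le) ?_
      push_cast
      simp only [Finset.card_map]
      have hb : ∀ ω ∈ Finset.univ.filter (fun ω => ω ∈ G),
          ((Finset.univ.filter (fun y => y ∈ (H ω)ᶜ)).card : ℝ) ≤ d₂ * Fintype.card Ω₂ := by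
        intro ω hω
        have := h2 ω (by simpa using hω)
        rw [up_eq (H ω)ᶜ (Finset.univ.filter (fun y => y ∈ (H ω)ᶜ)) (by intro x; simp)] at this
        rwa [div_le_iff₀ c2] at this
      refine (Finset.sum_le_sum hb).trans ?_
      rw [Finset.sum_const, nsmul_eq_mul, Fintype.card_prod]
      push_cast
      have : ((Finset.univ.filter (fun ω => ω ∈ G)).card : ℝ) ≤ Fintype.card Ω₁ := by
        exact_mod_cast Finset.card_le_univ _
      nlinarith [mul_nonneg hd₂ c2.le]
  rw [up_compl] at key
  linarith

/-- independence of events depending on disjoint coordinates -/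
lemma up_indep {ι α : Type*} [DecidableEq ι] [Fintype ι] [Fintype α] [Nonempty α] (S : Set ι)
    (E F : Set (ι → α))
    (hE : ∀ ω ω' : ι → α, (∀ u ∈ S, ω u = ω' u) → (ω ∈ E → ω' ∈ E))
    (hF : ∀ ω ω' : ι → α, (∀ u, u ∉ S → ω u = ω' u) → (ω ∈ F → ω' ∈ F)) :
    unifProb (E ∩ F) = unifProb E * unifProb F := by
  rw [up_eq (E ∩ F) (Finset.univ.filter (fun ω => ω ∈ E ∩ F)) (by intro ω; simp),
    up_eq E (Finset.univ.filter (fun ω => ω ∈ E)) (by intro ω; simp),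
    up_eq F (Finset.univ.filter (fun ω => ω ∈ F)) (by intro ω; simp)]
  have c1 : (0 : ℝ) < Fintype.card (ι → α) := by exact_mod_cast Fintype.card_pos
  rw [div_mul_div_comm, div_eq_div_iff c1.ne' (by positivity), ← mul_assoc]
  congr 1
  have : (Finset.univ.filter (fun ω => ω ∈ E ∩ F) ×ˢ (Finset.univ : Finset (ι → α))).card =
    (Finset.univ.filter (fun ω => ω ∈ E) ×ˢ Finset.univ.filter (fun ω => ω ∈ F)).card := by
    let sw : (ι → α) × (ι → α) → (ι → α) × (ι → α) := fun p =>
      (fun u => if u ∈ S then p.1 u else p.2 u, fun u => if u ∈ S then p.2 u else p.1 u)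
    have hsw : ∀ p, sw (sw p) = p := by
      intro p
      ext u <;> simp only [sw] <;> split_ifs <;> rfl
    refine Finset.card_nbij' sw sw ?_ ?_ (fun p _ => hsw p) (fun p _ => hsw p)
    · intro p hp
      simp only [Finset.coe_product, Set.mem_prod, Finset.mem_coe, Finset.mem_filter,
        Finset.mem_univ, true_and, and_true, Set.mem_inter_iff] at hp ⊢
      constructor
      · refine hE p.1 _ ?_ hp.1
        intro u hu; simp [sw, hu]
      · refine hF p.1 _ ?_ hp.2
        intro u hu; simp [sw, hu]
    · intro p hp
      simp only [Finset.coe_product, Set.mem_prod, Finset.mem_coe, Finset.mem_filter,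
        Finset.mem_univ, true_and, and_true, Set.mem_inter_iff] at hp ⊢
      constructor
      · refine hE p.1 _ ?_ hp.1
        intro u hu; simp [sw, hu]
      · refine hF p.2 _ ?_ hp.2
        intro u hu; simp [sw, hu]
  rw [Finset.card_product, Finset.card_product, Finset.card_univ] at this
  exact_mod_cast this

lemma up_pi {ι α : Type*} [DecidableEq ι] [Fintype ι] [Fintype α] [Nonempty α] (s : ι → Finset α) :
    unifProb {ω : ι → α | ∀ u, ω u ∈ s u} = ∏ u, ((s u).card : ℝ) / (Fintype.card α : ℝ) := by
  rw [up_eq _ (Fintype.piFinset s) (by intro ω; simp), Fintype.card_piFinset, Fintype.card_fun, Finset.prod_div_distrib]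
  simp

lemma up_avoid {ι α : Type*} [DecidableEq ι] [Fintype ι] [Fintype α] [Nonempty α] (Q : Finset α)
    (B : Finset ι) :
    unifProb {ω : ι → α | ∀ u ∈ B, ω u ∈ Q} = ((Q.card : ℝ) / Fintype.card α) ^ B.card := by
  have := up_pi (fun u : ι => if u ∈ B then Q else (Finset.univ : Finset α))
  have e : {ω : ι → α | ∀ u, ω u ∈ (if u ∈ B then Q else (Finset.univ : Finset α))} =
      {ω : ι → α | ∀ u ∈ B, ω u ∈ Q} := by
    ext ω
    simp only [Set.mem_ofPred_eq]
    refine forall_congr' fun u => ?_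
    split_ifs with h <;> simp [h]
  rw [e] at this
  rw [this]
  have c1 : (Fintype.card α : ℝ) ≠ 0 := by exact_mod_cast Fintype.card_ne_zero
  have : ∀ u : ι, (((if u ∈ B then Q else (Finset.univ : Finset α)).card : ℝ) / Fintype.card α)
      = if u ∈ B then (Q.card : ℝ) / Fintype.card α else 1 := by
    intro u
    split_ifs
    · rfl
    · rw [Finset.card_univ, div_self c1]
  simp only [this]
  rw [Finset.prod_ite_mem, Finset.univ_inter, Finset.prod_const]

/-- exactly one node of `B` is outside `Q`, and it lies in `C`. -/
def oneIn {ι α : Type*} (Q : Finset α) (B C : Finset ι) : Set (ι → α) :=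
  {ω | ∃ v ∈ C, ω v ∉ Q ∧ ∀ w ∈ B, w ≠ v → ω w ∈ Q}

lemma up_oneIn {ι α : Type*} [DecidableEq ι] [Fintype ι] [Fintype α] [Nonempty α] (Q : Finset α)
    (B C : Finset ι) (hCB : C ⊆ B) (z : ℝ) (hz : z = (Q.card : ℝ) / Fintype.card α) :
    (C.card : ℝ) * ((1 - z) * z ^ B.card) ≤ unifProb (oneIn (α := α) Q B C) := by
  have c1 : (0 : ℝ) < Fintype.card α := by exact_mod_cast Fintype.card_pos
  have hz0 : 0 ≤ z := by rw [hz]; positivity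
  have hz1 : z ≤ 1 := by
    rw [hz, div_le_one c1]; exact_mod_cast Finset.card_le_univ _
  have single : ∀ v ∈ C, (1 - z) * z ^ B.card ≤
      unifProb {ω : ι → α | ω v ∉ Q ∧ ∀ w ∈ B, w ≠ v → ω w ∈ Q} := by
    intro v hv
    have hi := up_indep ({v} : Set ι) {ω : ι → α | ω v ∉ Q} {ω : ι → α | ∀ w ∈ B.erase v, ω w ∈ Q}
      (by
        intro ω ω' h h'
        simp only [Set.mem_ofPred_eq] at h' ⊢
        rwa [← h v rfl])
      (by
        intro ω ω' h h' w hw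
        rw [← h w (by simpa using Finset.ne_of_mem_erase hw)]
        exact h' w hw)
    have e : {ω : ι → α | ω v ∉ Q} ∩ {ω : ι → α | ∀ w ∈ B.erase v, ω w ∈ Q} =
        {ω : ι → α | ω v ∉ Q ∧ ∀ w ∈ B, w ≠ v → ω w ∈ Q} := by
      ext ω
      simp only [Set.mem_inter_iff, Set.mem_ofPred_eq, Finset.mem_erase]
      constructor
      · rintro ⟨a, b⟩; exact ⟨a, fun w hw hn => b w ⟨hn, hw⟩⟩
      · rintro ⟨a, b⟩; exact ⟨a, fun w hw => b w hw.2 hw.1⟩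
    rw [e, up_avoid, ← hz] at hi
    have h1 : unifProb {ω : ι → α | ω v ∉ Q} = 1 - z := by
      have : {ω : ι → α | ω v ∉ Q} = {ω : ι → α | ∀ w ∈ ({v} : Finset ι), ω w ∈ Q}ᶜ := by
        ext ω; simp
      rw [this, up_compl, up_avoid]; simp [hz]
    rw [hi, h1]
    apply mul_le_mul_of_nonneg_left _ (by linarith)
    apply pow_le_pow_of_le_one hz0 hz1
    exact Finset.card_le_card (Finset.erase_subset _ _)
  rw [← nsmul_eq_mul, ← Finset.sum_const]
  refine (Finset.sum_le_sum single).trans ?_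
  unfold unifProb
  rw [← Finset.sum_div]
  gcongr
  rw [← Nat.cast_sum, Nat.cast_le, ← Finset.card_biUnion]
  · apply Finset.card_le_card
    intro ω hω
    simp only [Finset.mem_biUnion, Finset.mem_filter, Finset.mem_univ, true_and,
      Set.mem_ofPred_eq] at hω ⊢
    exact hω
  · intro v hv w hw hvw
    rw [Function.onFun, Finset.disjoint_left]
    intro ω h1 h2
    simp only [Finset.mem_filter, Finset.mem_univ, true_and, Set.mem_ofPred_eq] at h1 h2
    exact h1.1 (h2.2 v (hCB hv) hvw)

lemma up_blocks {ι α κ : Type*} [DecidableEq ι] [Fintype ι] [Fintype α] [Nonempty α] (Q : Finset α)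
    (T : Finset κ) (B C : κ → Finset ι) (hCB : ∀ b, C b ⊆ B b)
    (hd : ∀ b b', b ≠ b' → Disjoint (B b) (B b')) (p : ℝ) (hp1 : p ≤ 1)
    (hp : ∀ b, p ≤ unifProb (oneIn (α := α) Q (B b) (C b))) :
    unifProb {ω : ι → α | ∀ b ∈ T, ω ∉ oneIn Q (B b) (C b)} ≤ (1 - p) ^ T.card := by
  induction T using Finset.induction_on with
  | empty =>
    simp only [Finset.card_empty, pow_zero]
    unfold unifProb
    apply div_le_one_of_le₀ _ (by positivity)
    exact_mod_cast Finset.card_le_univ _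
  | insert b T hb ih =>
    rw [Finset.card_insert_of_notMem hb, pow_succ']
    have hi := up_indep (B b : Set ι) (oneIn (α := α) Q (B b) (C b))ᶜ
      {ω : ι → α | ∀ b ∈ T, ω ∉ oneIn Q (B b) (C b)}
      (by
        intro ω ω' h h' hg
        apply h'
        obtain ⟨v, hv, h1, h2⟩ := hg
        refine ⟨v, hv, ?_, fun w hw hn => ?_⟩
        · rw [h v (hCB b hv)]; exact h1
        · rw [h w hw]; exact h2 w hw hn)
      (by
        intro ω ω' h h' b' hb' hg
        apply h' b' hb'
        have hne : b' ≠ b := fun e => hb (e ▸ hb')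
        have hdis := Finset.disjoint_left.mp (hd b' b hne)
        obtain ⟨v, hv, h1, h2⟩ := hg
        refine ⟨v, hv, ?_, fun w hw hn => ?_⟩
        · rw [h v (hdis (hCB b' hv))]; exact h1
        · rw [h w (hdis hw)]; exact h2 w hw hn)
    have e : {ω : ι → α | ∀ b' ∈ insert b T, ω ∉ oneIn Q (B b') (C b')} =
      (oneIn (α := α) Q (B b) (C b))ᶜ ∩ {ω : ι → α | ∀ b ∈ T, ω ∉ oneIn Q (B b) (C b)} := by
      ext ω; simp
    rw [e, hi, up_compl]
    apply mul_le_mul _ ih (up_nonneg _) (by linarith)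
    linarith [hp b]

lemma sum_pow_count {α : Type*} [DecidableEq α] [Fintype α] (n : ℕ) (S : Finset α) (x : ℝ) :
    ∑ ρ : Fin n → α, x ^ (Finset.univ.filter (fun t => ρ t ∈ S)).card =
      ((Fintype.card α : ℝ) + (x - 1) * S.card) ^ n := by
  have h1 : ∀ ρ : Fin n → α, x ^ (Finset.univ.filter (fun t => ρ t ∈ S)).card =
      ∏ t, (if ρ t ∈ S then x else 1) := by
    intro ρ
    rw [Finset.prod_ite]; simp
  simp only [h1]
  have h2 := Finset.prod_univ_sum (ι := Fin n) (fun _ => (Finset.univ : Finset α))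
    (fun _ a => if a ∈ S then x else (1 : ℝ))
  simp only [Fintype.piFinset_univ] at h2
  rw [← h2, Finset.prod_const, Finset.card_univ, Fintype.card_fin]
  congr 1
  have : ∀ a : α, (if a ∈ S then x else (1 : ℝ)) = 1 + (if a ∈ S then (x - 1) else 0) := by
    intro a; split_ifs <;> ring
  simp only [this, Finset.sum_add_distrib]
  simp; ring

lemma up_lower {α : Type*} [DecidableEq α] [Fintype α] [Nonempty α] (n : ℕ) (S : Finset α) (a : ℝ) :
    unifProb {ρ : Fin n → α | ((Finset.univ.filter (fun t => ρ t ∈ S)).card : ℝ) ≤ a} ≤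
      Real.exp (a * Real.log 2 - n * (S.card / Fintype.card α) / 2) := by
  have c1 : (0 : ℝ) < Fintype.card α := by exact_mod_cast Fintype.card_pos
  unfold unifProb
  rw [div_le_iff₀ (by exact_mod_cast Fintype.card_pos), Fintype.card_fun, Fintype.card_fin]
  have hs := sum_pow_count n S (1/2)
  have h1 : ((Finset.univ.filter (fun ρ => ρ ∈ {ρ : Fin n → α |
      ((Finset.univ.filter (fun t => ρ t ∈ S)).card : ℝ) ≤ a})).card : ℝ) *
        Real.exp (- a * Real.log 2) ≤ ((Fintype.card α : ℝ) + (1/2 - 1) * S.card) ^ n := by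
    rw [← hs, ← nsmul_eq_mul, ← Finset.sum_const]
    refine le_trans ?_ (Finset.sum_le_sum_of_subset_of_nonneg (Finset.subset_univ
      (Finset.univ.filter (fun ρ => ρ ∈ {ρ : Fin n → α |
      ((Finset.univ.filter (fun t => ρ t ∈ S)).card : ℝ) ≤ a}))) (fun _ _ _ => by positivity))
    apply Finset.sum_le_sum
    intro ρ hρ
    simp only [Finset.mem_filter, Finset.mem_univ, true_and, Set.mem_ofPred_eq] at hρ
    have : ((1:ℝ)/2) = Real.exp (- Real.log 2) := by
      rw [Real.exp_neg, Real.exp_log (by norm_num)]; norm_num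
    rw [this, ← Real.exp_nat_mul]
    apply Real.exp_le_exp.mpr
    have := Real.log_pos (show (1:ℝ) < 2 by norm_num)
    nlinarith
  have hle : (S.card : ℝ) ≤ Fintype.card α := by exact_mod_cast Finset.card_le_univ _
  have h2 : ((Fintype.card α : ℝ) + (1/2 - 1) * S.card) ^ n ≤
      (Fintype.card α : ℝ) ^ n * Real.exp (- (n * (S.card / Fintype.card α) / 2)) := by
    have e : (Fintype.card α : ℝ) + (1/2 - 1) * S.card =
      Fintype.card α * (-(S.card / Fintype.card α) / 2 + 1) := by
      field_simp; ring
    rw [e, mul_pow]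
    gcongr
    rw [show - ((n:ℝ) * (S.card / Fintype.card α) / 2) =
      n * (-(S.card / Fintype.card α) / 2) by ring, Real.exp_nat_mul]
    apply pow_le_pow_left₀ _ (Real.add_one_le_exp _)
    have : (S.card : ℝ) / Fintype.card α ≤ 1 := by rwa [div_le_one c1]
    linarith
  have h3 := h1.trans h2
  have h4 : Real.exp (a * Real.log 2 - n * (S.card / Fintype.card α) / 2) =
    Real.exp (- (n * (S.card / Fintype.card α) / 2)) / Real.exp (- a * Real.log 2) := by
    rw [← Real.exp_sub]; congr 1; ring
  rw [h4, div_mul_eq_mul_div, le_div_iff₀ (Real.exp_pos _)]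
  push_cast
  linarith

lemma up_upper {α : Type*} [DecidableEq α] [Fintype α] [Nonempty α] (n : ℕ) (S : Finset α) (a : ℝ) :
    unifProb {ρ : Fin n → α | a ≤ ((Finset.univ.filter (fun t => ρ t ∈ S)).card : ℝ)} ≤
      Real.exp (n * (S.card / Fintype.card α) - a * Real.log 2) := by
  have c1 : (0 : ℝ) < Fintype.card α := by exact_mod_cast Fintype.card_pos
  unfold unifProb
  rw [div_le_iff₀ (by exact_mod_cast Fintype.card_pos), Fintype.card_fun, Fintype.card_fin]
  have hs := sum_pow_count n S 2
  have h1 : ((Finset.univ.filter (fun ρ => ρ ∈ {ρ : Fin n → α |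
      a ≤ ((Finset.univ.filter (fun t => ρ t ∈ S)).card : ℝ)})).card : ℝ) *
        Real.exp (a * Real.log 2) ≤ ((Fintype.card α : ℝ) + (2 - 1) * S.card) ^ n := by
    rw [← hs, ← nsmul_eq_mul, ← Finset.sum_const]
    refine le_trans ?_ (Finset.sum_le_sum_of_subset_of_nonneg (Finset.subset_univ
      (Finset.univ.filter (fun ρ => ρ ∈ {ρ : Fin n → α |
      a ≤ ((Finset.univ.filter (fun t => ρ t ∈ S)).card : ℝ)}))) (fun _ _ _ => by positivity))
    apply Finset.sum_le_sum
    intro ρ hρ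
    simp only [Finset.mem_filter, Finset.mem_univ, true_and, Set.mem_ofPred_eq] at hρ
    have h2 := Real.log_pos (show (1:ℝ) < 2 by norm_num)
    have : (2:ℝ) ^ (Finset.univ.filter (fun t => ρ t ∈ S)).card =
        Real.exp ((Finset.univ.filter (fun t => ρ t ∈ S)).card * Real.log 2) := by
      rw [Real.exp_nat_mul, Real.exp_log (by norm_num)]
    rw [this]
    apply Real.exp_le_exp.mpr
    nlinarith
  have h2 : ((Fintype.card α : ℝ) + (2 - 1) * S.card) ^ n ≤
      (Fintype.card α : ℝ) ^ n * Real.exp (n * (S.card / Fintype.card α)) := by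
    have e : (Fintype.card α : ℝ) + (2 - 1) * S.card =
      Fintype.card α * ((S.card / Fintype.card α) + 1) := by
      field_simp; ring
    rw [e, mul_pow]
    gcongr
    rw [Real.exp_nat_mul]
    apply pow_le_pow_left₀ (by positivity) (Real.add_one_le_exp _)
  have h3 := h1.trans h2
  rw [Real.exp_sub, div_mul_eq_mul_div, le_div_iff₀ (Real.exp_pos _)]
  push_cast
  linarith

lemma cmod {m : ℕ} (a b : Fin m) :
    (a.val + m - b.val) % m = if b.val ≤ a.val then a.val - b.val else a.val + m - b.val := by
  have ha := a.isLt
  have hb := b.isLt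
  split_ifs with h
  · rw [show a.val + m - b.val = (a.val - b.val) + m by omega, Nat.add_mod_right,
      Nat.mod_eq_of_lt (by omega)]
  · rw [Nat.mod_eq_of_lt (by omega)]

lemma fin_card {m : ℕ} (lo len : ℕ) (h : lo + len ≤ m) :
    (Finset.univ.filter (fun x : Fin m => lo ≤ x.val ∧ x.val < lo + len)).card = len := by
  rw [← Finset.card_map Fin.valEmbedding]
  have : (Finset.univ.filter (fun x : Fin m => lo ≤ x.val ∧ x.val < lo + len)).map
      Fin.valEmbedding = Finset.Ico lo (lo + len) := by
    ext y
    simp only [Finset.mem_map, Finset.mem_filter, Finset.mem_univ, true_and, Finset.mem_Ico,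
      Fin.valEmbedding_apply]
    constructor
    · rintro ⟨x, h, rfl⟩; exact h
    · intro hy; exact ⟨⟨y, by omega⟩, hy, rfl⟩
  rw [this]; simp

/-- a box in the torus -/
def boxAt (m lo₁ lo₂ len : ℕ) : Finset (Node m) :=
  (Finset.univ.filter (fun x : Fin m => lo₁ ≤ x.val ∧ x.val < lo₁ + len)) ×ˢ
  (Finset.univ.filter (fun x : Fin m => lo₂ ≤ x.val ∧ x.val < lo₂ + len))

lemma mem_boxAt {m lo₁ lo₂ len : ℕ} (u : Node m) : u ∈ boxAt m lo₁ lo₂ len ↔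
    (lo₁ ≤ u.1.val ∧ u.1.val < lo₁ + len) ∧ (lo₂ ≤ u.2.val ∧ u.2.val < lo₂ + len) := by
  simp [boxAt]

lemma card_boxAt {m lo₁ lo₂ len : ℕ} (h₁ : lo₁ + len ≤ m) (h₂ : lo₂ + len ≤ m) :
    (boxAt m lo₁ lo₂ len).card = len ^ 2 := by
  rw [boxAt, Finset.card_product, fin_card _ _ h₁, fin_card _ _ h₂, sq]

lemma geo_lower {m r lo₁ lo₂ : ℕ} (h₁ : lo₁ + 7 * r ≤ m) (h₂ : lo₂ + 7 * r ≤ m)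
    (u v w : Node m) (hu : u ∈ boxAt m (lo₁ + 3 * r) (lo₂ + 3 * r) r)
    (hv : v ∈ boxAt m (lo₁ + 3 * r) (lo₂ + 3 * r) r) (hw : w ∉ boxAt m lo₁ lo₂ (7 * r)) :
    torusDist u v < torusDist u w := by
  rw [mem_boxAt] at hu hv hw
  unfold torusDist
  have d1 : cdist u.1 v.1 < r := by rw [cdist_eq]; split_ifs <;> omega
  have d2 : cdist u.2 v.2 < r := by rw [cdist_eq]; split_ifs <;> omega
  have := w.1.isLt
  have := w.2.isLt
  by_cases hc : lo₁ ≤ w.1.val ∧ w.1.val < lo₁ + 7 * r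
  · have hc2 : ¬ (lo₂ ≤ w.2.val ∧ w.2.val < lo₂ + 7 * r) := fun h => hw ⟨hc, h⟩
    have : 2 * r ≤ cdist u.2 w.2 := by rw [cdist_eq]; split_ifs <;> omega
    omega
  · have : 2 * r ≤ cdist u.1 w.1 := by rw [cdist_eq]; split_ifs <;> omega
    omega

/-- box of side `R` near `u` -/
def nbox {m : ℕ} (R : ℕ) (u : Node m) : Finset (Node m) :=
  boxAt m (min u.1.val (m - R)) (min u.2.val (m - R)) R

lemma card_nbox {m R : ℕ} (h : R ≤ m) (u : Node m) : (nbox R u).card = R ^ 2 :=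
  card_boxAt (by omega) (by omega)

lemma nbox_dist {m R : ℕ} (u w : Node m) (hw : w ∈ nbox R u) :
    torusDist u w ≤ 2 * R := by
  rw [nbox, mem_boxAt] at hw
  unfold torusDist
  have := u.1.isLt
  have := u.2.isLt
  have := w.1.isLt
  have := w.2.isLt
  have d1 : cdist u.1 w.1 ≤ R := by rw [cdist_eq]; split_ifs <;> omega
  have d2 : cdist u.2 w.2 ≤ R := by rw [cdist_eq]; split_ifs <;> omega
  omega

lemma card_cdist {m D : ℕ} (b : Fin m) :
    (Finset.univ.filter (fun x : Fin m => cdist x b ≤ D)).card ≤ 2 * (D + 1) := by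
  have hs : (Finset.univ.filter (fun x : Fin m => cdist x b ≤ D)) ⊆
      (Finset.univ.filter (fun x : Fin m => (x.val + m - b.val) % m ≤ D)) ∪
      (Finset.univ.filter (fun x : Fin m => (b.val + m - x.val) % m ≤ D)) := by
    intro x hx
    simpa [cdist] using hx
  refine (Finset.card_le_card hs).trans ((Finset.card_union_le _ _).trans ?_)
  have c1 : (Finset.univ.filter (fun x : Fin m => (x.val + m - b.val) % m ≤ D)).card ≤ D + 1 := by
    rw [← Finset.card_range (D + 1)]
    refine Finset.card_le_card_of_injOn (fun x => (x.val + m - b.val) % m) ?_ ?_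
    · intro x hx
      simp at hx
      simp; omega
    · intro x _ y _ h
      simp only [cmod] at h
      have := x.isLt
      have := y.isLt
      ext
      split_ifs at h <;> omega
  have c2 : (Finset.univ.filter (fun x : Fin m => (b.val + m - x.val) % m ≤ D)).card ≤ D + 1 := by
    rw [← Finset.card_range (D + 1)]
    refine Finset.card_le_card_of_injOn (fun x => (b.val + m - x.val) % m) ?_ ?_
    · intro x hx
      simp at hx
      simp; omega
    · intro x _ y _ h
      simp only [cmod] at h
      have := x.isLt
      have := y.isLt
      ext
      split_ifs at h <;> omega
  omega

/-- nodes near `v` -/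
noncomputable def near {m : ℕ} (R : ℕ) (v : Node m) : Finset (Node m) :=
  (Finset.univ.filter (fun x : Fin m => cdist x v.1 ≤ 2 * R)) ×ˢ
  (Finset.univ.filter (fun x : Fin m => cdist x v.2 ≤ 2 * R))

lemma card_near {m R : ℕ} (hR : 1 ≤ R) (v : Node m) : (near R v).card ≤ 36 * R ^ 2 := by
  rw [near, Finset.card_product]
  have h1 := card_cdist (D := 2 * R) v.1
  have h2 := card_cdist (D := 2 * R) v.2
  calc _ ≤ (6 * R) * (6 * R) := Nat.mul_le_mul (by omega) (by omega)
    _ = _ := by ring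

/-- cache contents avoiding `j` -/
noncomputable def avoid (M : ℕ) {K : ℕ} (j : Fin K) : Finset (Fin M → Fin K) :=
  Finset.univ.filter (fun f => ∀ i, f i ≠ j)

lemma card_avoid (M : ℕ) {K : ℕ} (j : Fin K) :
    ((avoid M j).card : ℝ) / Fintype.card (Fin M → Fin K) = (((K : ℝ) - 1) / K) ^ M := by
  have hK : 1 ≤ K := by have := j.isLt; omega
  have : avoid M j = Fintype.piFinset (fun _ : Fin M => ({j}ᶜ : Finset (Fin K))) := by
    ext f; simp [avoid]
  rw [this, Fintype.card_piFinset]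
  simp [Finset.card_compl, Nat.cast_sub hK]
  rw [div_pow]

lemma cached_iff {m M K : ℕ} (ω : Placement m M K) (u : Node m) (j : Fin K) :
    cached ω u j ↔ ω u ∉ avoid M j := by
  simp [cached, avoid]

lemma det_exists {m M K n' R : ℕ} (ω : Placement m M K) (ρ : Fin n' → Node m × Fin K)
    (h : ∀ j u, ∃ w ∈ nbox R u, cached ω w j) : ∃ A, validAssign ω ρ A := by
  have : ∀ t, ∃ a, cached ω a (ρ t).2 ∧
    ∀ v, cached ω v (ρ t).2 → torusDist (ρ t).1 a ≤ torusDist (ρ t).1 v := by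
    intro t
    obtain ⟨w, _, hw⟩ := h (ρ t).2 (ρ t).1
    obtain ⟨a, ha, hmin⟩ := Finset.exists_min_image
      (Finset.univ.filter (fun v => cached ω v (ρ t).2)) (fun v => torusDist (ρ t).1 v)
      ⟨w, by simpa using hw⟩
    refine ⟨a, by simpa using ha, fun v hv => hmin v (by simpa using hv)⟩
  choose A hA using this
  exact ⟨A, hA⟩

/-- requests that can be served by `v` -/
noncomputable def serv {m M K : ℕ} (R : ℕ) (ω : Placement m M K) (v : Node m) :
    Finset (Node m × Fin K) := near R v ×ˢ (Finset.univ.image (ω v))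

lemma card_serv {m M K R : ℕ} (hR : 1 ≤ R) (ω : Placement m M K) (v : Node m) :
    (serv R ω v).card ≤ 36 * R ^ 2 * M := by
  rw [serv, Finset.card_product]
  refine Nat.mul_le_mul (card_near hR v) ?_
  refine Finset.card_image_le.trans ?_
  simp

lemma det_upper {m M K n' R : ℕ} (ω : Placement m M K) (ρ : Fin n' → Node m × Fin K)
    (h : ∀ j u, ∃ w ∈ nbox R u, cached ω w j) (A : Fin n' → Node m) (hA : validAssign ω ρ A)
    (a : ℝ) (ha : 0 ≤ a)
    (hc : ∀ v, ((Finset.univ.filter (fun t => ρ t ∈ serv R ω v)).card : ℝ) ≤ a) :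
    (maxLoad A : ℝ) ≤ a := by
  have : maxLoad A ≤ ⌊a⌋₊ := by
    unfold maxLoad
    apply Finset.sup_le
    intro v _
    apply Nat.le_floor
    refine le_trans ?_ (hc v)
    rw [Nat.cast_le]
    apply Finset.card_le_card
    intro t ht
    simp only [Finset.mem_filter, Finset.mem_univ, true_and] at ht ⊢
    subst ht
    obtain ⟨h1, h2⟩ := hA t
    obtain ⟨w, hw, hwc⟩ := h (ρ t).2 (ρ t).1
    have h3 := (h2 w hwc).trans (nbox_dist _ _ hw)
    unfold torusDist at h3
    obtain ⟨i, hi⟩ := h1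
    simp only [serv, near, Finset.mem_product, Finset.mem_filter, Finset.mem_univ, true_and,
      Finset.mem_image]
    exact ⟨⟨by omega, by omega⟩, i, hi⟩
  exact (Nat.cast_le.mpr this).trans (Nat.floor_le ha)

lemma det_lower {m M K n' r lo₁ lo₂ : ℕ} (h₁ : lo₁ + 7 * r ≤ m) (h₂ : lo₂ + 7 * r ≤ m)
    (ω : Placement m M K) (ρ : Fin n' → Node m × Fin K) (j : Fin K)
    (A : Fin n' → Node m) (hA : validAssign ω ρ A)
    (h : ω ∈ oneIn (avoid M j) (boxAt m lo₁ lo₂ (7 * r))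
      (boxAt m (lo₁ + 3 * r) (lo₂ + 3 * r) r)) :
    (Finset.univ.filter (fun t => ρ t ∈ boxAt m (lo₁ + 3 * r) (lo₂ + 3 * r) r ×ˢ {j})).card
      ≤ maxLoad A := by
  obtain ⟨v, hv, hvc, hw⟩ := h
  rw [← cached_iff] at hvc
  unfold maxLoad
  refine le_trans ?_ (Finset.le_sup (f := fun v : Node m =>
    (Finset.univ.filter fun t => A t = v).card) (Finset.mem_univ v))
  apply Finset.card_le_card
  intro t ht
  simp only [Finset.mem_filter, Finset.mem_univ, true_and, Finset.mem_product,
    Finset.mem_singleton] at ht ⊢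
  obtain ⟨hA1, hA2⟩ := hA t
  rw [ht.2] at hA1 hA2
  have hle := hA2 v hvc
  by_contra hne
  have hin : A t ∉ boxAt m lo₁ lo₂ (7 * r) := by
    intro hin
    exact (cached_iff _ _ _).mp hA1 (hw _ hin hne)
  have := geo_lower h₁ h₂ _ v _ ht.1 hv hin
  omega

lemma box_disj {m s a b a' b' : ℕ} (h : ¬ (a = a' ∧ b = b')) :
    Disjoint (boxAt m (a * s) (b * s) s) (boxAt m (a' * s) (b' * s) s) := by
  rw [Finset.disjoint_left]
  intro u h1 h2
  rw [mem_boxAt] at h1 h2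
  apply h
  have key : ∀ x c c' : ℕ, c * s ≤ x → x < c * s + s → c' * s ≤ x → x < c' * s + s → c = c' := by
    intro x c c' g1 g2 g3 g4
    have e1 : c < c' + 1 := by
      by_contra hh
      have : (c' + 1) * s ≤ c * s := Nat.mul_le_mul_right s (by omega)
      rw [Nat.add_mul] at this
      omega
    have e2 : c' < c + 1 := by
      by_contra hh
      have : (c + 1) * s ≤ c' * s := Nat.mul_le_mul_right s (by omega)
      rw [Nat.add_mul] at this
      omega
    omega
  exact ⟨key _ _ _ h1.1.1 h1.1.2 h2.1.1 h2.1.2, key _ _ _ h1.2.1 h1.2.2 h2.2.1 h2.2.2⟩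

lemma req_lower (m K r : ℕ) (hm : 1 ≤ m) (hK : 1 ≤ K) (C : Finset (Node m))
    (hC : C.card = r ^ 2) (j : Fin K) (a₁ : ℝ) :
    unifProb {ρ : Fin (m ^ 2) → Node m × Fin K |
          ((Finset.univ.filter (fun t => ρ t ∈ C ×ˢ {j})).card : ℝ) ≤ a₁} ≤
      Real.exp (a₁ * Real.log 2 - (r : ℝ) ^ 2 / K / 2) := by
  have : Nonempty (Fin K) := ⟨⟨0, hK⟩⟩
  have : Nonempty (Fin m) := ⟨⟨0, hm⟩⟩
  have hm0 : (0 : ℝ) < m := by exact_mod_cast hm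
  have hK0 : (0 : ℝ) < K := by exact_mod_cast hK
  have hcard : (Fintype.card (Node m × Fin K) : ℝ) = (m : ℝ) ^ 2 * K := by
    simp [sq]
  refine (up_lower _ _ _).trans (le_of_eq ?_)
  rw [hcard, Finset.card_product, hC, Finset.card_singleton]
  congr 1
  push_cast
  field_simp

lemma req_upper (m M K R : ℕ) (hm : 1 ≤ m) (hK : 1 ≤ K) (hR1 : 1 ≤ R) (ω : Placement m M K)
    (a₂ : ℝ) :
    unifProb {ρ : Fin (m ^ 2) → Node m × Fin K | ∃ v ∈ (Finset.univ : Finset (Node m)),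
          ρ ∈ {ρ : Fin (m ^ 2) → Node m × Fin K |
            a₂ ≤ ((Finset.univ.filter (fun t => ρ t ∈ serv R ω v)).card : ℝ)}} ≤
      (m : ℝ) ^ 2 * Real.exp (36 * (R : ℝ) ^ 2 * M / K - a₂ * Real.log 2) := by
  have : Nonempty (Fin K) := ⟨⟨0, hK⟩⟩
  have : Nonempty (Fin m) := ⟨⟨0, hm⟩⟩
  have hm0 : (0 : ℝ) < m := by exact_mod_cast hm
  have hK0 : (0 : ℝ) < K := by exact_mod_cast hK
  have hcard : (Fintype.card (Node m × Fin K) : ℝ) = (m : ℝ) ^ 2 * K := by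
    simp [sq]
  refine (up_union_le _ _).trans ?_
  have e : ∀ v : Node m, unifProb {ρ : Fin (m ^ 2) → Node m × Fin K |
        a₂ ≤ ((Finset.univ.filter (fun t => ρ t ∈ serv R ω v)).card : ℝ)} ≤
        Real.exp (36 * (R : ℝ) ^ 2 * M / K - a₂ * Real.log 2) := by
    intro v
    refine (up_upper _ _ _).trans ?_
    apply Real.exp_le_exp.mpr
    apply sub_le_sub_right
    rw [hcard]
    have h1 : ((serv R ω v).card : ℝ) ≤ 36 * (R : ℝ) ^ 2 * M := by
      exact_mod_cast card_serv hR1 ω v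
    calc (((m ^ 2 : ℕ) : ℝ)) * ((serv R ω v).card / ((m : ℝ) ^ 2 * K))
        = (serv R ω v).card / K := by push_cast; field_simp
      _ ≤ _ := by gcongr
  refine (Finset.sum_le_sum (fun v _ => e v)).trans ?_
  rw [Finset.sum_const, Finset.card_univ, nsmul_eq_mul]
  apply le_of_eq
  simp [sq]

theorem core (m M K r q R : ℕ) (hm : 1 ≤ m) (hK : 1 ≤ K) (hr : 1 ≤ r) (hq : q * (7 * r) ≤ m)
    (hR1 : 1 ≤ R) (hR : R ≤ m) (z p a₁ a₂ : ℝ) (hz : z = (((K : ℝ) - 1) / K) ^ M)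
    (hp1 : p ≤ 1) (hp : p ≤ (r : ℝ) ^ 2 * ((1 - z) * z ^ (49 * r ^ 2))) (ha₂ : 0 ≤ a₂) :
    1 - (((m : ℝ) ^ 2 * K * z ^ (R ^ 2) + (1 - p) ^ (q ^ 2)) +
      (Real.exp (a₁ * Real.log 2 - (r : ℝ) ^ 2 / K / 2) +
        (m : ℝ) ^ 2 * Real.exp (36 * (R : ℝ) ^ 2 * M / K - a₂ * Real.log 2))) ≤
      unifProb {x : Placement m M K × (Fin (m ^ 2) → Node m × Fin K) |
          (∃ A, validAssign x.1 x.2 A) ∧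
          ∀ A, validAssign x.1 x.2 A → a₁ ≤ (maxLoad A : ℝ) ∧ (maxLoad A : ℝ) ≤ a₂} := by
  have : Nonempty (Fin K) := ⟨⟨0, hK⟩⟩
  have : Nonempty (Fin m) := ⟨⟨0, hm⟩⟩
  have hm0 : (0 : ℝ) < m := by exact_mod_cast hm
  have hK0 : (0 : ℝ) < K := by exact_mod_cast hK
  let j₀ : Fin K := ⟨0, hK⟩
  let B : Fin q × Fin q → Finset (Node m) := fun b =>
    boxAt m (b.1.val * (7 * r)) (b.2.val * (7 * r)) (7 * r)
  let C : Fin q × Fin q → Finset (Node m) := fun b =>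
    boxAt m (b.1.val * (7 * r) + 3 * r) (b.2.val * (7 * r) + 3 * r) r
  have hlo : ∀ a : Fin q, a.val * (7 * r) + 7 * r ≤ m := by
    intro a
    have : (a.val + 1) * (7 * r) ≤ q * (7 * r) := Nat.mul_le_mul_right _ a.isLt
    rw [Nat.add_mul] at this
    omega
  have hcC : ∀ b, (C b).card = r ^ 2 := by
    intro b
    have h1 := hlo b.1
    have h2 := hlo b.2
    exact card_boxAt (by omega) (by omega)
  have hcB : ∀ b, (B b).card = 49 * r ^ 2 := by
    intro b
    have := card_boxAt (hlo b.1) (hlo b.2)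
    rw [show 49 * r ^ 2 = (7 * r) ^ 2 by ring]
    exact this
  let G : Set (Placement m M K) := {ω | (∀ j u, ∃ w ∈ nbox R u, cached ω w j) ∧
    ∃ b : Fin q × Fin q, ω ∈ oneIn (avoid M j₀) (B b) (C b)}
  let H : Placement m M K → Set (Fin (m ^ 2) → Node m × Fin K) := fun ω =>
    {ρ | (∀ b : Fin q × Fin q, ω ∈ oneIn (avoid M j₀) (B b) (C b) →
        ∃ b : Fin q × Fin q, ω ∈ oneIn (avoid M j₀) (B b) (C b) ∧
        a₁ < ((Finset.univ.filter (fun t => ρ t ∈ C b ×ˢ {j₀})).card : ℝ)) ∧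
      ∀ v, ((Finset.univ.filter (fun t => ρ t ∈ serv R ω v)).card : ℝ) < a₂}
  have hsub : {x : Placement m M K × (Fin (m ^ 2) → Node m × Fin K) | x.1 ∈ G ∧ x.2 ∈ H x.1} ⊆
      {x : Placement m M K × (Fin (m ^ 2) → Node m × Fin K) |
          (∃ A, validAssign x.1 x.2 A) ∧
          ∀ A, validAssign x.1 x.2 A → a₁ ≤ (maxLoad A : ℝ) ∧ (maxLoad A : ℝ) ≤ a₂} := by
    rintro ⟨ω, ρ⟩ ⟨⟨g1, b, g2⟩, h1, h2⟩
    refine ⟨det_exists ω ρ g1, fun A hA => ⟨?_, ?_⟩⟩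
    · obtain ⟨b', g3, g4⟩ := h1 b g2
      refine g4.le.trans ?_
      rw [Nat.cast_le]
      exact det_lower (hlo b'.1) (hlo b'.2) ω ρ j₀ A hA g3
    · exact det_upper ω ρ g1 A hA a₂ ha₂ (fun v => (h2 v).le)
  refine le_trans ?_ (up_mono hsub)
  apply up_prod
  · positivity
  · have hs : Gᶜ ⊆ {ω : Placement m M K | ∃ x ∈ (Finset.univ : Finset (Fin K × Node m)),
        ω ∈ {ω : Placement m M K | ∀ w ∈ nbox R x.2, ω w ∈ avoid M x.1}} ∪
        {ω : Placement m M K | ∀ b ∈ (Finset.univ : Finset (Fin q × Fin q)),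
          ω ∉ oneIn (avoid M j₀) (B b) (C b)} := by
      intro ω hω
      by_cases h1 : ∀ j u, ∃ w ∈ nbox R u, cached ω w j
      · right
        intro b _ hb
        exact hω ⟨h1, b, hb⟩
      · left
        push Not at h1
        obtain ⟨j, u, h⟩ := h1
        refine ⟨(j, u), Finset.mem_univ _, fun w hw => ?_⟩
        have := h w hw
        rw [cached_iff] at this
        simpa using this
    refine (up_mono hs).trans ((up_or_le _ _).trans (add_le_add ?_ ?_))
    · refine (up_union_le _ _).trans ?_
      have e : ∀ x : Fin K × Node m,
          unifProb {ω : Placement m M K | ∀ w ∈ nbox R x.2, ω w ∈ avoid M x.1} = z ^ (R ^ 2) := by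
        intro x
        rw [up_avoid, card_avoid, card_nbox hR, hz]
      rw [Finset.sum_congr rfl (fun x _ => e x), Finset.sum_const, Finset.card_univ, nsmul_eq_mul]
      apply le_of_eq
      rw [Fintype.card_prod, Fintype.card_prod, Fintype.card_fin, Fintype.card_fin]
      push_cast
      ring
    · have := up_blocks (avoid M j₀) (Finset.univ : Finset (Fin q × Fin q)) B C ?_ ?_ p hp1 ?_
      · refine this.trans (le_of_eq ?_)
        congr 1
        simp [sq]
      · intro b u hu
        simp only [B, C, mem_boxAt] at hu ⊢
        omega
      · intro b b' hb
        apply box_disj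
        rintro ⟨h1, h2⟩
        exact hb (Prod.ext (Fin.ext h1) (Fin.ext h2))
      · intro b
        have hCB : C b ⊆ B b := by
          intro u hu
          simp only [B, C, mem_boxAt] at hu ⊢
          omega
        have := up_oneIn (avoid M j₀) (B b) (C b) hCB z (by rw [card_avoid, hz])
        rw [hcC, hcB] at this
        push_cast at this
        exact hp.trans this
  · rintro ω ⟨g1, b, g2⟩
    have hs : (H ω)ᶜ ⊆
        {ρ : Fin (m ^ 2) → Node m × Fin K |
          ((Finset.univ.filter (fun t => ρ t ∈ C b ×ˢ {j₀})).card : ℝ) ≤ a₁} ∪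
        {ρ : Fin (m ^ 2) → Node m × Fin K | ∃ v ∈ (Finset.univ : Finset (Node m)),
          ρ ∈ {ρ : Fin (m ^ 2) → Node m × Fin K |
            a₂ ≤ ((Finset.univ.filter (fun t => ρ t ∈ serv R ω v)).card : ℝ)}} := by
      intro ρ hρ
      by_contra hn
      simp only [Set.mem_union, not_or, Set.mem_ofPred_eq, not_le, not_exists, not_and,
        Finset.mem_univ, forall_true_left] at hn
      exact hρ ⟨fun _ _ => ⟨b, g2, hn.1⟩, hn.2⟩
    refine (up_mono hs).trans ((up_or_le _ _).trans (add_le_add ?_ ?_))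
    · exact req_lower m K r hm hK (C b) (hcC b) j₀ a₁
    · exact req_upper m M K R hm hK hR1 ω a₂

lemma ceil_sqrt (y : ℝ) (hy : 1 ≤ y) :
    1 ≤ ⌈Real.sqrt y⌉₊ ∧ y ≤ ((⌈Real.sqrt y⌉₊ : ℕ) : ℝ) ^ 2 ∧
      ((⌈Real.sqrt y⌉₊ : ℕ) : ℝ) ^ 2 ≤ 4 * y := by
  have h1 : 1 ≤ Real.sqrt y := Real.one_le_sqrt.mpr hy
  have h2 := Nat.le_ceil (Real.sqrt y)
  have h3 := Nat.ceil_lt_add_one (show 0 ≤ Real.sqrt y by positivity)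
  have h4 := Real.sq_sqrt (show 0 ≤ y by linarith)
  refine ⟨Nat.one_le_ceil_iff.mpr (by linarith), ?_, ?_⟩ <;> nlinarith

set_option maxHeartbeats 2000000 in
lemma final_m (ε : ℝ) (hε0 : 0 < ε) (hε1 : ε < 1) (M : ℕ) (hM : 1 ≤ M) (δ : ℝ)
    (hδ : δ = ε / (1568 * M)) (m : ℕ) (L : ℝ) (hL : L = Real.log ((m ^ 2 : ℕ) : ℝ))
    (h1 : 16 ≤ δ * L) (h2 : 1568 * L ^ 2 ≤ Real.exp ((3 * ε / 4) * L)) :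
    1 - (((m ^ 2 : ℕ) : ℝ)) ^ (-(δ / 8)) ≤
        unifProb {x : Placement m M (Kf ε (m ^ 2)) ×
            (Fin (m ^ 2) → Node m × Fin (Kf ε (m ^ 2))) |
          (∃ A, validAssign x.1 x.2 A) ∧
          ∀ A, validAssign x.1 x.2 A →
            (δ / 4) * L ≤ (maxLoad A : ℝ) ∧
            (maxLoad A : ℝ) ≤ (2000 * M) * L} := by
  have hM' : (1 : ℝ) ≤ M := by exact_mod_cast hM
  have hδ0 : 0 < δ := by rw [hδ]; positivity
  have hδM : δ * M = ε / 1568 := by rw [hδ]; field_simp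
  have hδ1 : δ ≤ 1 := by nlinarith
  have hL1 : 16 ≤ L := by nlinarith
  have hm : 1 ≤ m := by
    rcases Nat.eq_zero_or_pos m with h | h
    · subst h; simp at hL; linarith
    · exact h
  have hm0 : (0 : ℝ) < m := by exact_mod_cast hm
  have hX : ((m ^ 2 : ℕ) : ℝ) = Real.exp L := by
    rw [hL, Real.exp_log]; positivity
  have hX2 : (m : ℝ) ^ 2 = Real.exp L := by rw [← hX]; push_cast; ring
  set K := Kf ε (m ^ 2) with hKdef
  have hpow : ((m ^ 2 : ℕ) : ℝ) ^ (1 - ε) = Real.exp ((1 - ε) * L) := by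
    rw [hX, ← Real.exp_mul]; ring_nf
  have hKlow : Real.exp ((1 - ε) * L) ≤ K := by
    rw [hKdef, Kf, hpow]; exact Nat.le_ceil _
  have hE1 : 1 < Real.exp ((1 - ε) * L) := by
    rw [Real.one_lt_exp_iff]
    apply mul_pos <;> linarith
  have hK2 : (2 : ℝ) ≤ K := by
    have : 1 < K := by
      have : (1 : ℝ) < K := by linarith
      exact_mod_cast this
    exact_mod_cast this
  have hKup : (K : ℝ) ≤ 2 * Real.exp ((1 - ε) * L) := by
    rw [hKdef, Kf, hpow]
    have := Nat.ceil_lt_add_one (Real.exp_pos ((1 - ε) * L)).le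
    linarith
  have hKX : (K : ℝ) ≤ Real.exp L := by
    have : K ≤ m ^ 2 := by
      rw [hKdef, Kf, hpow]
      apply Nat.ceil_le.mpr
      rw [hX]
      apply Real.exp_le_exp.mpr
      nlinarith
    rw [← hX]; exact_mod_cast this
  have hKL : (K : ℝ) * (1568 * L ^ 2) ≤ 2 * Real.exp ((1 - ε / 4) * L) := by
    have : Real.exp ((1 - ε / 4) * L) = Real.exp ((1 - ε) * L) * Real.exp ((3 * ε / 4) * L) := by
      rw [← Real.exp_add]; ring_nf
    rw [this, ← mul_assoc 2]
    apply mul_le_mul hKup h2 (by positivity) (by positivity)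
  have hexpm : Real.exp ((1 - ε / 4) * L) ≤ Real.exp L := by
    apply Real.exp_le_exp.mpr
    nlinarith
  have hKL1 : (K : ℝ) * L * 784 ≤ (m : ℝ) ^ 2 := by
    rw [hX2]
    have : (K : ℝ) * L ≤ K * L ^ 2 := by
      apply mul_le_mul_of_nonneg_left _ (by positivity)
      nlinarith
    linarith
  have hK0 : (0 : ℝ) < K := by linarith
  -- choice of r
  have hy1 : 1 ≤ δ * K * L := by nlinarith
  obtain ⟨hr1, hr2, hr3⟩ := ceil_sqrt (δ * K * L) hy1
  set r := ⌈Real.sqrt (δ * K * L)⌉₊ with hrdef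
  have hy2 : 1 ≤ 4 * K * L := by nlinarith
  obtain ⟨hR1, hR2, hR3⟩ := ceil_sqrt (4 * K * L) hy2
  set R := ⌈Real.sqrt (4 * K * L)⌉₊ with hRdef
  have hr0 : (0 : ℝ) < r := by exact_mod_cast hr1
  have hr4 : (r : ℝ) ^ 2 ≤ 4 * (K * L) := by
    have : δ * K * L ≤ 1 * (K * L) := by
      rw [mul_assoc]; apply mul_le_mul_of_nonneg_right hδ1; positivity
    linarith
  have hRm : R ≤ m := by
    have : (R : ℝ) ≤ m := by
      apply (pow_le_pow_iff_left₀ (by positivity) hm0.le two_ne_zero).mp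
      linarith
    exact_mod_cast this
  have h7r : 7 * r ≤ m := by
    have : (7 * r : ℝ) ≤ m := by
      apply (pow_le_pow_iff_left₀ (by positivity) hm0.le two_ne_zero).mp
      rw [mul_pow]
      linarith
    exact_mod_cast this
  set q := m / (7 * r) with hqdef
  have hq : q * (7 * r) ≤ m := Nat.div_mul_le_self _ _
  have hq2 : (m : ℝ) ≤ q * (14 * r) := by
    have hq1 : 1 ≤ q := (Nat.one_le_div_iff (by omega)).mpr h7r
    have h : m < q * (7 * r) + 7 * r := Nat.lt_div_mul_add (by omega)
    have h' : 7 * r ≤ q * (7 * r) := Nat.le_mul_of_pos_left _ hq1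
    have : m ≤ q * (14 * r) := by
      have : q * (14 * r) = q * (7 * r) + q * (7 * r) := by ring
      omega
    exact_mod_cast this
  -- z
  obtain ⟨z, hz⟩ : ∃ z : ℝ, z = (((K : ℝ) - 1) / K) ^ M := ⟨_, rfl⟩
  have hw0 : 0 ≤ ((K : ℝ) - 1) / K := div_nonneg (by linarith) hK0.le
  have hw1 : ((K : ℝ) - 1) / K ≤ 1 - 1 / K := by
    apply le_of_eq; field_simp
  have hwlow : Real.exp (-(2 / K)) ≤ ((K : ℝ) - 1) / K := by
    rw [Real.exp_neg]
    have e1 : 2 / (K : ℝ) + 1 ≤ Real.exp (2 / K) := Real.add_one_le_exp _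
    have e2 : (Real.exp (2 / K))⁻¹ ≤ (2 / (K : ℝ) + 1)⁻¹ := inv_anti₀ (by positivity) e1
    refine e2.trans ?_
    rw [show (2 / (K : ℝ) + 1)⁻¹ = K / (K + 2) by field_simp; ring,
      div_le_div_iff₀ (by positivity) hK0]
    nlinarith
  have hwup : ((K : ℝ) - 1) / K ≤ Real.exp (-(1 / K)) := by
    have := Real.add_one_le_exp (-(1 / (K : ℝ)))
    linarith
  have hz0 : 0 ≤ z := by rw [hz]; exact pow_nonneg hw0 _
  have h1z : 1 / (K : ℝ) ≤ 1 - z := by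
    have : z ≤ ((K : ℝ) - 1) / K := by
      rw [hz]
      refine pow_le_of_le_one hw0 ?_ (by omega)
      have : 0 < 1 / (K : ℝ) := by positivity
      linarith
    linarith
  have hzlow : Real.exp (-(ε / 4) * L) ≤ z ^ (49 * r ^ 2) := by
    rw [hz, ← pow_mul]
    refine le_trans ?_ (pow_le_pow_left₀ (Real.exp_pos _).le hwlow _)
    rw [← Real.exp_nat_mul]
    apply Real.exp_le_exp.mpr
    push_cast
    have : (M : ℝ) * (49 * r ^ 2) * (2 / K) ≤ (ε / 4) * L := by
      have e : (M : ℝ) * (49 * r ^ 2) * (2 / K) = 98 * M * r ^ 2 / K := by ring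
      rw [e, div_le_iff₀ hK0]
      calc 98 * (M : ℝ) * r ^ 2 ≤ 98 * M * (4 * (δ * K * L)) := by gcongr
        _ = 392 * (δ * M) * K * L := by ring
        _ = _ := by rw [hδM]; ring
    linarith
  have hzup : z ^ (R ^ 2) ≤ Real.exp (-4 * L) := by
    rw [hz, ← pow_mul]
    refine (pow_le_pow_left₀ hw0 hwup _).trans ?_
    rw [← Real.exp_nat_mul]
    apply Real.exp_le_exp.mpr
    push_cast
    have : 4 * L ≤ (M : ℝ) * R ^ 2 * (1 / K) := by
      rw [mul_one_div, le_div_iff₀ hK0]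
      calc 4 * L * K = 4 * K * L := by ring
        _ ≤ 1 * (R : ℝ) ^ 2 := by linarith
        _ ≤ _ := by gcongr
    linarith
  obtain ⟨p, hpdef⟩ : ∃ p : ℝ, p = Real.exp (-(ε / 4) * L) := ⟨_, rfl⟩
  have hp0 : 0 < p := by rw [hpdef]; exact Real.exp_pos _
  have hp1 : p ≤ 1 := by
    rw [hpdef, Real.exp_le_one_iff, neg_mul, neg_nonpos]
    positivity
  have hp : p ≤ (r : ℝ) ^ 2 * ((1 - z) * z ^ (49 * r ^ 2)) := by
    have e1 : 1 ≤ (r : ℝ) ^ 2 * (1 - z) := by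
      calc (1 : ℝ) ≤ δ * L := by linarith
        _ = (δ * K * L) * (1 / K) := by field_simp
        _ ≤ _ := by gcongr
    rw [← mul_assoc]
    rw [← hpdef] at hzlow
    calc p = 1 * p := by ring
      _ ≤ _ := by gcongr
  have hcore := core m M K r q R hm (by exact_mod_cast (by linarith : (1 : ℝ) ≤ K)) hr1 hq hR1 hRm z p
    ((δ / 4) * L) ((2000 * M) * L) hz hp1 hp (by positivity)
  refine le_trans ?_ hcore
  have hδL : δ / 4 * L ≤ 1 * L := mul_le_mul_of_nonneg_right (by linarith) (by linarith)
  have hlog2 := Real.log_two_gt_d9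
  have hlog2' := Real.log_two_lt_d9
  have t1 : (m : ℝ) ^ 2 * K * z ^ (R ^ 2) ≤ Real.exp (-(δ / 4) * L) := by
    calc (m : ℝ) ^ 2 * K * z ^ (R ^ 2) ≤ Real.exp L * Real.exp L * Real.exp (-4 * L) := by
          rw [hX2]; gcongr
      _ = Real.exp (-2 * L) := by rw [← Real.exp_add, ← Real.exp_add]; ring_nf
      _ ≤ _ := by apply Real.exp_le_exp.mpr; linarith
  have t2 : (1 - p) ^ (q ^ 2) ≤ Real.exp (-(δ / 4) * L) := by
    have e1 : 1 - p ≤ Real.exp (-p) := by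
      have := Real.add_one_le_exp (-p); linarith
    refine (pow_le_pow_left₀ (by linarith) e1 _).trans ?_
    rw [← Real.exp_nat_mul]
    apply Real.exp_le_exp.mpr
    push_cast
    have hpq : L ≤ (q : ℝ) ^ 2 * p := by
      have f1 : (m : ℝ) ^ 2 ≤ (q : ℝ) ^ 2 * (196 * r ^ 2) := by
        calc (m : ℝ) ^ 2 ≤ (q * (14 * r)) ^ 2 := by gcongr
          _ = _ := by ring
      have f2 : (m : ℝ) ^ 2 ≤ (q : ℝ) ^ 2 * (784 * (K * L)) := by
        refine f1.trans ?_
        exact mul_le_mul_of_nonneg_left (by linarith) (by positivity)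
      have f3 : (m : ℝ) ^ 2 * p = Real.exp ((1 - ε / 4) * L) := by
        rw [hX2, hpdef, ← Real.exp_add]; ring_nf
      have f4 : L * (784 * (K * L)) ≤ (q : ℝ) ^ 2 * p * (784 * (K * L)) := by
        calc L * (784 * (K * L)) = (K * (1568 * L ^ 2)) / 2 := by ring
          _ ≤ Real.exp ((1 - ε / 4) * L) := by linarith
          _ = (m : ℝ) ^ 2 * p := f3.symm
          _ ≤ (q : ℝ) ^ 2 * (784 * (K * L)) * p := by gcongr
          _ = _ := by ring
      exact le_of_mul_le_mul_right f4 (by positivity)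
    linarith
  have t3 : Real.exp ((δ / 4) * L * Real.log 2 - (r : ℝ) ^ 2 / K / 2) ≤
      Real.exp (-(δ / 4) * L) := by
    apply Real.exp_le_exp.mpr
    have : δ * L ≤ (r : ℝ) ^ 2 / K := by
      rw [le_div_iff₀ hK0]; linarith
    have g : δ / 4 * L * Real.log 2 ≤ δ / 4 * L * 1 :=
      mul_le_mul_of_nonneg_left (by linarith) (by positivity)
    linarith
  have t4 : (m : ℝ) ^ 2 * Real.exp (36 * (R : ℝ) ^ 2 * M / K - (2000 * M) * L * Real.log 2) ≤
      Real.exp (-(δ / 4) * L) := by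
    rw [hX2, ← Real.exp_add]
    apply Real.exp_le_exp.mpr
    have g1 : 36 * (R : ℝ) ^ 2 * M / K ≤ 576 * (M * L) := by
      rw [div_le_iff₀ hK0]
      calc 36 * (R : ℝ) ^ 2 * M ≤ 36 * (4 * (4 * K * L)) * M := by gcongr
        _ = _ := by ring
    have g2 : L ≤ M * L := le_mul_of_one_le_left (by linarith) hM'
    have g3 : 1000 * (M * L) ≤ (2000 * M) * L * Real.log 2 := by
      have : (2000 * M) * L * (1 / 2) ≤ (2000 * M) * L * Real.log 2 :=
        mul_le_mul_of_nonneg_left (by linarith) (by positivity)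
      linarith
    linarith
  have t5 : 4 * Real.exp (-(δ / 4) * L) ≤ (((m ^ 2 : ℕ) : ℝ)) ^ (-(δ / 8)) := by
    rw [hX, ← Real.exp_mul]
    have : Real.exp (L * -(δ / 8)) = Real.exp ((δ / 8) * L) * Real.exp (-(δ / 4) * L) := by
      rw [← Real.exp_add]; ring_nf
    rw [this]
    gcongr
    have a1 := Real.add_one_le_exp ((1 : ℝ))
    have a2 : Real.exp 1 * Real.exp 1 ≤ Real.exp ((δ / 8) * L) := by
      rw [← Real.exp_add]
      apply Real.exp_le_exp.mpr; linarith
    have a3 : (2 : ℝ) * 2 ≤ Real.exp 1 * Real.exp 1 :=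
      mul_le_mul (by linarith) (by linarith) (by norm_num) (Real.exp_pos _).le
    linarith
  linarith

/-- With `K = ⌈n^(1-ε)⌉` (`0 < ε < 1` constant), `M` a fixed positive
integer and Uniform popularity, the maximum load of Strategy I (nearest replica) is
`Θ(log n)` with high probability over the random placement, the `n` random requests
(uniform origin, uniform file) and the random tie-breaking. -/
theorem statement2 (ε : ℝ) (hε0 : 0 < ε) (hε1 : ε < 1) (M : ℕ) (hM : 1 ≤ M) :
    ∃ c₁ c₂ c : ℝ, 0 < c₁ ∧ 0 < c₂ ∧ 0 < c ∧ ∃ N : ℕ, ∀ m : ℕ, N ≤ m →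
      1 - (((m ^ 2 : ℕ) : ℝ)) ^ (-c) ≤
        unifProb {x : Placement m M (Kf ε (m ^ 2)) ×
            (Fin (m ^ 2) → Node m × Fin (Kf ε (m ^ 2))) |
          (∃ A, validAssign x.1 x.2 A) ∧
          ∀ A, validAssign x.1 x.2 A →
            c₁ * Real.log ((m ^ 2 : ℕ) : ℝ) ≤ (maxLoad A : ℝ) ∧
            (maxLoad A : ℝ) ≤ c₂ * Real.log ((m ^ 2 : ℕ) : ℝ)} := by

  have hM' : (1 : ℝ) ≤ M := by exact_mod_cast hM
  have hδ0 : 0 < ε / (1568 * M) := by positivity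
  refine ⟨ε / (1568 * M) / 4, 2000 * M, ε / (1568 * M) / 8, by positivity, by positivity,
    by positivity, ?_⟩
  have hlog : Tendsto (fun m : ℕ => Real.log ((m ^ 2 : ℕ) : ℝ)) atTop atTop := by
    refine Real.tendsto_log_atTop.comp (tendsto_natCast_atTop_atTop.comp ?_)
    exact tendsto_pow_atTop (by norm_num)
  have ev1 : ∀ᶠ L : ℝ in atTop, 16 ≤ ε / (1568 * M) * L :=
    (tendsto_id.const_mul_atTop hδ0).eventually_ge_atTop 16
  have ev2 : ∀ᶠ L : ℝ in atTop, 1568 * L ^ 2 ≤ Real.exp ((3 * ε / 4) * L) := by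
    have h := isLittleO_pow_exp_pos_mul_atTop 2 (show 0 < 3 * ε / 4 by positivity)
    have h' := h.bound (show (0 : ℝ) < 1 / 1568 by norm_num)
    filter_upwards [h'] with L hL
    rw [Real.norm_of_nonneg (by positivity), Real.norm_of_nonneg (Real.exp_pos _).le] at hL
    linarith
  obtain ⟨N, hN⟩ := eventually_atTop.mp (hlog.eventually (ev1.and ev2))
  refine ⟨N, fun m hm => ?_⟩
  exact final_m ε hε0 hε1 M hM _ rfl m _ rfl (hN m hm).1 (hN m hm).2
end
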